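/- arXiv:1909.11347 — 3 statements merged into one kernel-verified Lean document; each statement's English description precedes it below -/
import Mathlib

section
/- Let X be a connected topological space that is homotopy equivalent to some separable metric absolute neighborhood retract, let Y be a metric absolute neighborhood retract, and let f : X → Y be a compressive continuous surjection. Then f is a homotopy equivalence. -/
universe u v

/-- A topological space `X` is an absolute neighborhood retract (ANR) if whenever
it is embedded as a closed subset of a metric space `Z`, some open neighborhood of
the image retracts onto the image. -/
def IsANR (X : Type u) [TopologicalSpace X] : Prop :=
  ∀ (Z : Type u) [MetricSpace Z] (e : X → Z),
    Topology.IsEmbedding e → IsClosed (Set.range e) →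
      ∃ (U : Set Z) (r : Z → Z), IsOpen U ∧ Set.range e ⊆ U ∧
        ContinuousOn r U ∧ (∀ z ∈ U, r z ∈ Set.range e) ∧ ∀ z ∈ Set.range e, r z = z

/-- `(V', V)` is a compressive pair for `f`: both sets are open, `V' ⊆ V`, and
`f⁻¹(V')` is contractible in `f⁻¹(V)`. -/
def IsCompressivePair {X Y : Type*} [TopologicalSpace X] [TopologicalSpace Y]
    (f : X → Y) (V' V : Set Y) : Prop :=
  IsOpen V' ∧ IsOpen V ∧ V' ⊆ V ∧
    ∃ ξ : (f ⁻¹' V') × unitInterval → (f ⁻¹' V),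
      Continuous ξ ∧
      (∀ x : f ⁻¹' V', ((ξ (x, 0) : X) = (x : X))) ∧
      ∃ c : f ⁻¹' V, ∀ x : f ⁻¹' V', ξ (x, 1) = c

/-- `f` is compressive: for every `y ∈ Y` and every open neighborhood `V` of `y`
there is an open neighborhood `V'` of `y` such that `(V', V)` is a compressive
pair for `f`. -/
def IsCompressive {X Y : Type*} [TopologicalSpace X] [TopologicalSpace Y]
    (f : X → Y) : Prop :=
  ∀ (y : Y) (V : Set Y), IsOpen V → y ∈ V →
    ∃ V' : Set Y, y ∈ V' ∧ IsCompressivePair f V' V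

/-!
Compressiveness lets a disk in `Y` with prescribed lift of its boundary be lifted to `X` up to an
arbitrarily small error: subdivide the disk and contract the fibers over small sets cell by cell.
Since `Y` is an ANR, small errors can be absorbed by short homotopies, so the endpoint map of the
mapping path space of `f` lifts disks relative to the boundary exactly. Every ANR is, up to
homotopy, dominated by the nerve of a cover; lifting over the nerve cell by cell therefore gives
existence and uniqueness up to homotopy of lifts along the endpoint map from any ANR. Lifting
`id : Y → Y` gives a right homotopy inverse of `f`, and uniqueness, applied to maps from the ANR
equivalent to `X`, makes it a left inverse.
-/

section

open Set Filter Topology Metric unitInterval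
open scoped ENNReal lp ContinuousMap

section ArensEells

variable {Y : Type u} [MetricSpace Y]

theorem abs_infDist_sub_infDist_le_dist (S : Set Y) (y z : Y) :
    |infDist y S - infDist z S| ≤ dist y z :=
  abs_sub_le_iff.2 ⟨by linarith [infDist_le_infDist_add_dist (s := S) (x := y) (y := z)],
    by linarith [infDist_le_infDist_add_dist (s := S) (x := z) (y := y), dist_comm y z]⟩

/-- The Kuratowski-type embedding of `Y` into the bounded functions on the finite subsets of `Y`,
normalized to vanish at the base point `y₀`. Using finite sets instead of points as coordinates
makes the image closed in its linear span (Arens–Eells). -/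
noncomputable def arensEells (y₀ y : Y) : ℓ^∞(Finset Y, ℝ) :=
  ⟨fun S => infDist y S - infDist y₀ S,
    memℓp_infty ⟨dist y y₀, by
      rintro _ ⟨S, rfl⟩
      exact abs_infDist_sub_infDist_le_dist _ _ _⟩⟩

theorem arensEells_apply (y₀ y : Y) (S : Finset Y) :
    arensEells y₀ y S = infDist y S - infDist y₀ S := rfl

theorem isometry_arensEells (y₀ : Y) : Isometry (arensEells y₀) := by
  refine Isometry.of_dist_eq fun y z => le_antisymm ?_ ?_
  · rw [dist_eq_norm]
    refine lp.norm_le_of_forall_le dist_nonneg fun S => ?_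
    simpa only [lp.coeFn_sub, Pi.sub_apply, arensEells_apply, sub_sub_sub_cancel_right,
      Real.norm_eq_abs] using abs_infDist_sub_infDist_le_dist (S : Set Y) y z
  · have h := lp.norm_apply_le_norm ENNReal.top_ne_zero (arensEells y₀ y - arensEells y₀ z) {z}
    simpa [dist_eq_norm, arensEells_apply, abs_of_nonneg] using h

theorem mem_range_arensEells_of_mem_closure_of_mem_span {y₀ : Y} {z : ℓ^∞(Finset Y, ℝ)}
    (hz : z ∈ closure (range (arensEells y₀)))
    (hspan : z ∈ Submodule.span ℝ (range (arensEells y₀))) : z ∈ range (arensEells y₀) := by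
  classical
  obtain ⟨c, rfl⟩ := Finsupp.mem_span_range_iff_exists_finsupp.1 hspan
  set z := c.sum fun y a => a • arensEells y₀ y with hzdef
  let S := insert y₀ c.support
  have infDist_eq_zero {y : Y} (hy : y ∈ S) : infDist y (S : Set Y) = 0 :=
    infDist_zero_of_mem (Finset.mem_coe.2 hy)
  have hzS : z S = 0 := by
    rw [hzdef, Finsupp.sum, lp.coeFn_sum, Finset.sum_apply]
    refine Finset.sum_eq_zero fun y hy => ?_
    rw [lp.coeFn_smul, Pi.smul_apply, arensEells_apply,
      infDist_eq_zero (Finset.mem_insert_of_mem hy),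
      infDist_eq_zero (Finset.mem_insert_self _ _), sub_zero, smul_zero]
  suffices z ∈ closure (arensEells y₀ '' S) by
    rw [(S.finite_toSet.image _).isClosed.closure_eq] at this
    exact image_subset_range _ _ this
  refine Metric.mem_closure_iff.2 fun ε hε => ?_
  obtain ⟨_, ⟨y, rfl⟩, hy⟩ := Metric.mem_closure_iff.1 hz (ε / 2) (half_pos hε)
  have hyS : infDist y (S : Set Y) < ε / 2 := by
    refine lt_of_le_of_lt ?_ hy
    have h := lp.norm_apply_le_norm ENNReal.top_ne_zero (arensEells y₀ y - z) S
    rw [lp.coeFn_sub, Pi.sub_apply, hzS, sub_zero, arensEells_apply,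
      infDist_eq_zero (Finset.mem_insert_self _ _), sub_zero, ← dist_eq_norm, dist_comm] at h
    exact (le_abs_self _).trans h
  obtain ⟨s, hs, hys⟩ :=
    (infDist_lt_iff (Finset.coe_nonempty.2 (Finset.insert_nonempty _ _))).1 hyS
  refine ⟨_, mem_image_of_mem _ hs, (dist_triangle _ (arensEells y₀ y) _).trans_lt ?_⟩
  rw [(isometry_arensEells y₀).dist_eq]
  linarith

theorem exists_isometry_isClosed_range (Y : Type u) [MetricSpace Y] [Nonempty Y] :
    ∃ (F : Type u) (_ : NormedAddCommGroup F) (_ : NormedSpace ℝ F) (e : Y → F),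
      Isometry e ∧ IsClosed (range e) := by
  obtain ⟨y₀⟩ := ‹Nonempty Y›
  let F := Submodule.span ℝ (range (arensEells y₀))
  let e (y : Y) : F := ⟨arensEells y₀ y, Submodule.subset_span (mem_range_self y)⟩
  have range_e : range e = (↑) ⁻¹' range (arensEells y₀) := by
    ext z
    exact ⟨fun ⟨y, hy⟩ => ⟨y, congrArg Subtype.val hy⟩, fun ⟨y, hy⟩ => ⟨y, Subtype.ext hy⟩⟩
  refine ⟨F, inferInstance, inferInstance, e,
    Isometry.of_dist_eq (isometry_arensEells y₀).dist_eq,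
    isClosed_of_closure_subset fun z hz => ?_⟩
  rw [range_e] at hz ⊢
  exact mem_range_arensEells_of_mem_closure_of_mem_span
    (continuous_subtype_val.closure_preimage_subset _ hz) z.2

theorem IsANR.exists_retraction [Nonempty Y] (hY : IsANR Y) :
    ∃ (F : Type u) (_ : NormedAddCommGroup F) (_ : NormedSpace ℝ F) (e : Y → F)
      (U : Set F) (r : F → Y), Isometry e ∧ IsOpen U ∧ range e ⊆ U ∧
        ContinuousOn r U ∧ Function.LeftInverse r e := by
  obtain ⟨F, _, _, e, he, hclosed⟩ := exists_isometry_isClosed_range Y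
  obtain ⟨U, r, hU, heU, hr, hrange, hfix⟩ := hY F e he.isEmbedding hclosed
  have hinv {z : F} (hz : r z ∈ range e) : e (Function.invFun e (r z)) = r z :=
    Function.invFun_eq hz
  refine ⟨F, inferInstance, inferInstance, e, U, Function.invFun e ∘ r, he, hU, heU,
    he.isEmbedding.continuousOn_iff.2 (hr.congr fun z hz => hinv (hrange z hz)), fun y => ?_⟩
  rw [Function.comp_apply, hfix _ (mem_range_self y),
    Function.leftInverse_invFun he.injective]

end ArensEells

theorem IsANR.exists_perturbed_homotopy {Y : Type u} [MetricSpace Y] [Nonempty Y] (hY : IsANR Y)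
    {Q : Type*} [TopologicalSpace Q] [CompactSpace Q] (K : C(Q × I, Y)) :
    ∃ δ > 0, ∀ ψ : C(Q, Y), (∀ z, dist (ψ z) (K (z, 0)) < δ) →
      ∃ K' : C(Q × I, Y), (∀ z, K' (z, 0) = ψ z) ∧ (∀ z, K' (z, 1) = K (z, 1)) ∧
        ∀ z, ψ z = K (z, 0) → ∀ s, K' (z, s) = K (z, s) := by
  obtain ⟨F, _, _, e, U, r, he, hU, heU, hr, hre⟩ := hY.exists_retraction
  obtain ⟨δ, hδ, hthick⟩ :=
    (isCompact_range (he.continuous.comp K.continuous)).exists_thickening_subset_open hU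
      ((range_comp_subset_range _ _).trans heU)
  refine ⟨δ, hδ, fun ψ hψ => ?_⟩
  let T (p : Q × I) : F := e (K p) + (1 - p.2 : ℝ) • (e (ψ p.1) - e (K (p.1, 0)))
  have hTU (p : Q × I) : T p ∈ U := by
    refine hthick (mem_thickening_iff.2 ⟨_, mem_range_self p, ?_⟩)
    calc dist (T p) (e (K p)) = (1 - p.2 : ℝ) * dist (ψ p.1) (K (p.1, 0)) := by
          rw [← he.dist_eq, dist_eq_norm, dist_eq_norm, add_sub_cancel_left, norm_smul,
            Real.norm_of_nonneg (sub_nonneg.2 p.2.2.2)]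
      _ ≤ dist (ψ p.1) (K (p.1, 0)) :=
          mul_le_of_le_one_left dist_nonneg (sub_le_self _ p.2.2.1)
      _ < δ := hψ p.1
  have hT : Continuous T := by
    have := he.continuous
    fun_prop
  refine ⟨⟨fun p => r (T p), hr.comp_continuous hT hTU⟩, fun z => ?_, fun z => ?_, fun z hz s => ?_⟩
  · simpa [T] using hre (ψ z)
  · simpa [T] using hre (K (z, 1))
  · simpa [T, hz] using hre (K (z, s))

section Compressive

variable {X Y : Type*} [TopologicalSpace X]

theorem IsCompressivePair.mono [TopologicalSpace Y] {f : X → Y} {V' V W' W : Set Y}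
    (h : IsCompressivePair f V' V) (hW' : IsOpen W') (hW : IsOpen W) (hWV' : W' ⊆ V')
    (hVW : V ⊆ W) : IsCompressivePair f W' W := by
  obtain ⟨-, -, hV'V, ξ, hξ, hξ₀, c, hξ₁⟩ := h
  exact ⟨hW', hW, hWV'.trans (hV'V.trans hVW),
    fun p => inclusion (preimage_mono hVW) (ξ (inclusion (preimage_mono hWV') p.1, p.2)),
    by fun_prop, fun x => hξ₀ (inclusion (preimage_mono hWV') x),
    inclusion (preimage_mono hVW) c, fun x => congrArg _ (hξ₁ _)⟩

theorem IsCompressivePair.exists_extension [TopologicalSpace Y] {f : X → Y} {V' V : Set Y}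
    (h : IsCompressivePair f V' V) :
    ∃ (ξ : X × ℝ → X) (c : X), ContinuousOn ξ ((f ⁻¹' V') ×ˢ univ) ∧
      (∀ x, ∀ t ≤ 0, ξ (x, t) = x) ∧ (∀ x, f x ∈ V' → ∀ t ≥ 1, ξ (x, t) = c) ∧
      (∀ x, f x ∈ V' → ∀ t, f (ξ (x, t)) ∈ V) ∧ f c ∈ V := by
  classical
  obtain ⟨-, -, -, ξ, hξ, hξ₀, c, hξ₁⟩ := h
  refine ⟨fun p => if hp : f p.1 ∈ V' then ξ (⟨p.1, hp⟩, projIcc 0 1 zero_le_one p.2) else p.1,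
    c, ?_, fun x t ht => ?_, fun x hx t ht => ?_, fun x hx t => ?_, c.2⟩
  · rw [continuousOn_iff_continuous_domRestrict]
    have : Continuous fun p : (f ⁻¹' V') ×ˢ (univ : Set ℝ) =>
        (ξ (⟨p.1.1, p.2.1⟩, projIcc 0 1 zero_le_one p.1.2) : X) := by fun_prop
    exact this.congr fun p => by rw [domRestrict_apply, dif_pos (show f p.1.1 ∈ V' from p.2.1)]
  · dsimp only
    split_ifs with hx
    · rw [projIcc_of_le_left _ ht]
      exact hξ₀ ⟨x, hx⟩
    · rfl
  · simp only [dif_pos hx]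
    rw [projIcc_of_right_le _ ht]
    exact congrArg _ (hξ₁ ⟨x, hx⟩)
  · simp only [dif_pos hx]
    exact (ξ _).2

theorem IsCompressive.exists_uniform [PseudoMetricSpace Y] {f : X → Y} (hf : IsCompressive f)
    {K : Set Y} (hK : IsCompact K) {δ : ℝ} (hδ : 0 < δ) :
    ∃ η > 0, ∀ y ∈ K, IsCompressivePair f (ball y η) (ball y δ) := by
  choose V' hyV' hV' using fun y => hf y (ball y (δ / 2)) isOpen_ball (mem_ball_self (half_pos hδ))
  obtain ⟨η, hη, hball⟩ := lebesgue_number_lemma_of_metric hK (fun y => (hV' y).1)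
    fun y _ => mem_iUnion.2 ⟨y, hyV' y⟩
  refine ⟨η, hη, fun y hy => ?_⟩
  obtain ⟨z, hz⟩ := hball y hy
  have hyz : dist y z < δ / 2 := (hV' z).2.2.1 (hz (mem_ball_self hη))
  exact (hV' z).mono isOpen_ball isOpen_ball hz
    (ball_subset_ball' (by rw [dist_comm]; linarith))

end Compressive

section ApproximateLift

variable {D X Y : Type*} [TopologicalSpace D] [TopologicalSpace X] [PseudoMetricSpace Y]

/-- `g` is a partial lift of `φ` through `f` on the set `O`, with error less than `δ`. -/
structure IsApproxLiftOn (f : X → Y) (φ : D → Y) (δ : ℝ) (g : D → X) (O : Set D) : Prop where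
  continuousOn : ContinuousOn g O
  dist_lt : ∀ w ∈ O, dist (f (g w)) (φ w) < δ

/-- A disjoint union of open sets, namely `{w | 0 < β w}` cut along the fibers of `a`, on each of
which `φ` varies little. The function `a` picks a representative of each of these sets. -/
structure IsPatch (φ : D → Y) (η : ℝ) (β : D → ℝ) (a : D → D) : Prop where
  continuous : Continuous β
  eventually_eq : ∀ w, 0 < β w → ∀ᶠ w' in 𝓝 w, a w' = a w
  dist_lt : ∀ w, 0 < β w → dist (φ w) (φ (a w)) < η

theorem IsPatch.mono {φ : D → Y} {η η' : ℝ} {β : D → ℝ} {a : D → D} (h : IsPatch φ η β a)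
    (hη : η ≤ η') : IsPatch φ η' β a :=
  ⟨h.continuous, h.eventually_eq, fun w hw => (h.dist_lt w hw).trans_le hη⟩

theorem IsPatch.mul {φ : D → Y} {η : ℝ} {β k : D → ℝ} {a : D → D} (h : IsPatch φ η β a)
    (hk : Continuous k) (hk₀ : 0 ≤ k) : IsPatch φ η (fun w => k w * β w) a where
  continuous := hk.mul h.continuous
  eventually_eq w hw := h.eventually_eq w (pos_of_mul_pos_right hw (hk₀ w))
  dist_lt w hw := h.dist_lt w (pos_of_mul_pos_right hw (hk₀ w))

/-- The partial lift `g` on `O`, contracted to the constant `c i` inside the piece of the patch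
represented by `i` along `ξ i`, and thereby extended to `{w | 1 / 2 < β w}`. -/
noncomputable def gluedLift (O : Set D) (g : D → X) (β : D → ℝ) (a : D → D)
    (ξ : D → X × ℝ → X) (c : D → X) (w : D) : X :=
  open Classical in if w ∈ O then ξ (a w) (g w, 4 * β w - 1) else c (a w)

theorem continuousOn_gluedLift {O : Set D} (hO : IsOpen O) {g : D → X} (hg : ContinuousOn g O)
    {φ : D → Y} {η : ℝ} {β : D → ℝ} {a : D → D} (hβ : IsPatch φ η β a) {S : D → Set X}
    (hS : ∀ i, IsOpen (S i)) (hgS : ∀ w ∈ O, 0 < β w → g w ∈ S (a w))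
    {ξ : D → X × ℝ → X} {c : D → X} (hξ : ∀ i, ContinuousOn (ξ i) (S i ×ˢ univ))
    (hξ₀ : ∀ i x, ∀ t ≤ 0, ξ i (x, t) = x) (hξ₁ : ∀ i, ∀ x ∈ S i, ∀ t ≥ 1, ξ i (x, t) = c i) :
    ContinuousOn (gluedLift O g β a ξ c) (O ∪ {w | 1 / 2 < β w}) := by
  intro w hw
  refine ContinuousAt.continuousWithinAt ?_
  have hβw := hβ.continuous.tendsto w
  rcases em (w ∈ O) with hwO | hwO
  · rcases lt_or_ge (β w) (1 / 4) with hlt | hge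
    · refine (hg.continuousAt (hO.mem_nhds hwO)).congr ?_
      filter_upwards [hO.mem_nhds hwO, hβw.eventually_lt_const hlt] with w' hw'O hw'
      rw [gluedLift, if_pos hw'O, hξ₀ _ _ _ (by linarith)]
    · have hpos : 0 < β w := by linarith
      have : ContinuousAt (fun w' => ξ (a w) (g w', 4 * β w' - 1)) w :=
        ContinuousAt.comp (f := fun w' => (g w', 4 * β w' - 1))
          ((hξ _).continuousAt
            (((hS _).prod isOpen_univ).mem_nhds ⟨hgS w hwO hpos, mem_univ _⟩))
          ((hg.continuousAt (hO.mem_nhds hwO)).prodMk (by have := hβ.continuous; fun_prop))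
      refine this.congr ?_
      filter_upwards [hO.mem_nhds hwO, hβ.eventually_eq w hpos] with w' hw'O haw'
      rw [gluedLift, if_pos hw'O, haw']
  · have hhalf : 1 / 2 < β w := hw.resolve_left hwO
    have hpos : 0 < β w := by linarith
    refine (continuousAt_const (y := c (a w))).congr ?_
    filter_upwards [hβ.eventually_eq w hpos, hβw.eventually_const_lt hhalf] with w' haw' hw'
    rw [gluedLift, ← haw']
    split_ifs with hw'O
    · exact (hξ₁ _ _ (hgS w' hw'O (by linarith)) _ (by linarith)).symm
    · rfl

theorem IsCompressive.exists_glue [CompactSpace D] {f : X → Y} (hf : Continuous f)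
    (hcomp : IsCompressive f) (φ : C(D, Y)) {δ : ℝ} (hδ : 0 < δ) :
    ∃ η > 0, ∀ (O : Set D) (g : D → X) (β : D → ℝ) (a : D → D), IsOpen O →
      IsApproxLiftOn f φ η g O → IsPatch φ η β a →
        ∃ g', IsApproxLiftOn f φ δ g' (O ∪ {w | 1 / 2 < β w}) ∧ ∀ w ∈ O, β w ≤ 0 → g' w = g w := by
  obtain ⟨η, hη, hpair⟩ := hcomp.exists_uniform (isCompact_range φ.continuous) (half_pos hδ)
  choose ξ c hξ hξ₀ hξ₁ hξV hcV using
    fun i => (hpair (φ i) (mem_range_self i)).exists_extension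
  refine ⟨min (η / 2) (δ / 2), by positivity, fun O g β a hO hg hβ => ?_⟩
  have hgO (w : D) (hw : w ∈ O) (hpos : 0 < β w) : f (g w) ∈ ball (φ (a w)) η := by
    have h₁ := (hg.dist_lt w hw).trans_le (min_le_left _ _)
    have h₂ := (hβ.dist_lt w hpos).trans_le (min_le_left _ _)
    exact (dist_triangle _ (φ w) _).trans_lt (by linarith)
  have dist_lt_of_mem {x : X} {w : D} (hx : f x ∈ ball (φ (a w)) (δ / 2)) (hpos : 0 < β w) :
      dist (f x) (φ w) < δ := by
    have h := (hβ.dist_lt w hpos).trans_le (min_le_right _ _)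
    exact (dist_triangle_right _ _ (φ (a w))).trans_lt (by linarith [mem_ball.1 hx])
  have eq_of_nonpos (w : D) (hwO : w ∈ O) (hw : β w ≤ 0) : gluedLift O g β a ξ c w = g w := by
    rw [gluedLift, if_pos hwO, hξ₀ _ _ _ (by linarith)]
  refine ⟨gluedLift O g β a ξ c, ⟨?_, fun w hw => ?_⟩, eq_of_nonpos⟩
  · exact continuousOn_gluedLift hO hg.continuousOn hβ
      (S := fun i => f ⁻¹' ball (φ i) η) (fun i => isOpen_ball.preimage hf) hgO hξ hξ₀ hξ₁
  · rcases em (w ∈ O) with hwO | hwO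
    · rcases le_or_gt (β w) 0 with hle | hpos
      · rw [eq_of_nonpos w hwO hle]
        linarith [hg.dist_lt w hwO, min_le_right (η / 2) (δ / 2)]
      · rw [gluedLift, if_pos hwO]
        exact dist_lt_of_mem (hξV _ _ (hgO w hwO hpos) _) hpos
    · rw [gluedLift, if_neg hwO]
      exact dist_lt_of_mem (hcV _) (one_half_pos.trans (hw.resolve_left hwO))

theorem IsCompressive.exists_glue_finset [CompactSpace D] {f : X → Y} (hf : Continuous f)
    (hcomp : IsCompressive f) (φ : C(D, Y)) {ι : Type*} (s : Finset ι) {δ : ℝ} (hδ : 0 < δ) :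
    ∃ η > 0, ∀ (O : Set D) (g : D → X) (β : ι → D → ℝ) (a : ι → D → D), IsOpen O →
      IsApproxLiftOn f φ η g O → (∀ i ∈ s, IsPatch φ η (β i) (a i)) →
        ∃ g', IsApproxLiftOn f φ δ g' (O ∪ ⋃ i ∈ s, {w | 1 / 2 < β i w}) ∧
          ∀ w ∈ O, (∀ i ∈ s, β i w ≤ 0) → g' w = g w := by
  classical
  induction s using Finset.induction_on generalizing δ with
  | empty => exact ⟨δ, hδ, fun O g β a _ hg _ => ⟨g, by simpa using hg, fun _ _ _ => rfl⟩⟩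
  | insert j s _ ih =>
    obtain ⟨η₁, hη₁, hglue⟩ := hcomp.exists_glue hf φ hδ
    obtain ⟨η₂, hη₂, hglues⟩ := ih hη₁
    refine ⟨min η₁ η₂, lt_min hη₁ hη₂, fun O g β a hO hg hβ => ?_⟩
    obtain ⟨g₁, hg₁, hg₁g⟩ := hglues O g β a hO
      ⟨hg.continuousOn, fun w hw => (hg.dist_lt w hw).trans_le (min_le_right _ _)⟩
      fun i hi => (hβ i (Finset.mem_insert_of_mem hi)).mono (min_le_right _ _)
    have hO₁ : IsOpen (O ∪ ⋃ i ∈ s, {w | 1 / 2 < β i w}) :=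
      hO.union (isOpen_biUnion fun i hi => isOpen_lt continuous_const
        (hβ i (Finset.mem_insert_of_mem hi)).continuous)
    obtain ⟨g₂, hg₂, hg₂g₁⟩ := hglue _ g₁ (β j) (a j) hO₁ hg₁
      ((hβ j (Finset.mem_insert_self j s)).mono (min_le_left _ _))
    refine ⟨g₂, ?_, fun w hw hβw => ?_⟩
    · rwa [Finset.set_biUnion_insert, union_comm {w | _}, ← union_assoc]
    · rw [hg₂g₁ w (Or.inl hw) (hβw j (Finset.mem_insert_self j s)),
        hg₁g w hw fun i hi => hβw i (Finset.mem_insert_of_mem hi)]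

end ApproximateLift

section Grid

variable {κ : Type*} [Fintype κ]

/-- The sets `{x | 0 < gridBump b x}`, for `b : κ → Bool`, are the open unit boxes centered at the
points of the integer grid shifted by `-b / 2`. -/
noncomputable def gridBump (b : κ → Bool) (x : κ → ℝ) : ℝ :=
  2 - 4 * ‖fun i => ((x i + if b i then 1 / 2 else 0 : ℝ) : UnitAddCircle)‖

/-- The grid point indexing the box of `gridBump b` that contains `x`. -/
noncomputable def gridLabel (b : κ → Bool) (x : κ → ℝ) (i : κ) : ℤ :=
  round (x i + if b i then 1 / 2 else 0)

theorem continuous_gridBump (b : κ → Bool) : Continuous (gridBump b) := by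
  unfold gridBump
  have : Continuous ((↑) : ℝ → UnitAddCircle) := AddCircle.continuous_mk' 1
  fun_prop

theorem abs_sub_gridLabel_lt {b : κ → Bool} {x : κ → ℝ} (hx : 0 < gridBump b x) (i : κ) :
    |(x i + if b i then 1 / 2 else 0) - gridLabel b x i| < 1 / 2 := by
  have h := norm_le_pi_norm (fun i => ((x i + if b i then 1 / 2 else 0 : ℝ) : UnitAddCircle)) i
  rw [UnitAddCircle.norm_eq] at h
  unfold gridBump at hx
  exact h.trans_lt (by linarith)

theorem eventually_gridLabel_eq {b : κ → Bool} {x : κ → ℝ} (hx : 0 < gridBump b x) :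
    ∀ᶠ x' in 𝓝 x, gridLabel b x' = gridLabel b x := by
  have hcont (i : κ) : Continuous fun x' : κ → ℝ =>
      |(x' i + if b i then 1 / 2 else 0) - gridLabel b x i| := by fun_prop
  filter_upwards [eventually_all.2 fun i =>
    ((hcont i).tendsto x).eventually_lt_const (abs_sub_gridLabel_lt hx i)] with x' hx'
  ext i
  refine round_eq_iff.2 ?_
  have := abs_lt.1 (hx' i)
  constructor <;> linarith

theorem dist_lt_one_of_gridLabel_eq {b : κ → Bool} {x x' : κ → ℝ} (hx : 0 < gridBump b x)
    (hx' : 0 < gridBump b x') (h : gridLabel b x = gridLabel b x') : dist x x' < 1 := by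
  refine (dist_pi_lt_iff one_pos).2 fun i => ?_
  have h₁ := abs_lt.1 (abs_sub_gridLabel_lt hx i)
  have h₂ := abs_lt.1 (abs_sub_gridLabel_lt hx' i)
  rw [h] at h₁
  rw [Real.dist_eq, abs_lt]
  constructor <;> linarith

theorem exists_half_lt_gridBump (x : κ → ℝ) : ∃ b, 1 / 2 < gridBump b x := by
  have hcoord (t : ℝ) :
      ∃ b : Bool, ‖((t + if b then 1 / 2 else 0 : ℝ) : UnitAddCircle)‖ ≤ 1 / 4 := by
    simp only [UnitAddCircle.norm_eq]
    have ht := abs_le.1 (abs_sub_round t)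
    rcases le_or_gt |t - round t| (1 / 4) with h | h
    · exact ⟨false, by simpa using h⟩
    · refine ⟨true, ?_⟩
      rw [if_pos rfl]
      rcases lt_abs.1 h with h | h
      · refine (round_le _ (round t + 1)).trans (abs_le.2 ?_)
        push_cast
        constructor <;> linarith
      · refine (round_le _ (round t)).trans (abs_le.2 ?_)
        constructor <;> linarith
  choose b hb using fun i => hcoord (x i)
  refine ⟨b, ?_⟩
  have := (pi_norm_le_iff_of_nonneg (by norm_num)).2 hb
  unfold gridBump
  linarith

end Grid

section Patches

variable {κ : Type*} [Finite κ]

theorem exists_patches {D : Set (κ → ℝ)} [CompactSpace D] [Nonempty D] {Y : Type*}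
    [PseudoMetricSpace Y] (φ : C(D, Y)) {η : ℝ} (hη : 0 < η) :
    ∃ (β : (κ → Bool) → D → ℝ) (a : (κ → Bool) → D → D),
      (∀ b, IsPatch φ η (β b) (a b)) ∧ ∀ w, ∃ b, 1 / 2 < β b w := by
  cases nonempty_fintype κ
  obtain ⟨ε, hε, hφ⟩ := Metric.uniformContinuous_iff.1
    (CompactSpace.uniformContinuous_of_continuous φ.continuous) η hη
  let x (w : D) : κ → ℝ := ε⁻¹ • w.1
  have hx : Continuous x := by fun_prop
  let β (b : κ → Bool) (w : D) : ℝ := gridBump b (x w)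
  let a (b : κ → Bool) (w : D) : D :=
    Function.invFunOn (gridLabel b ∘ x) {w' | 0 < β b w'} (gridLabel b (x w))
  refine ⟨β, a, fun b => ⟨(continuous_gridBump b).comp hx, fun w hw => ?_, fun w hw => ?_⟩,
    fun w => exists_half_lt_gridBump (x w)⟩
  · filter_upwards [(hx.tendsto w).eventually (eventually_gridLabel_eq hw)] with w' hw'
    exact congrArg (Function.invFunOn (gridLabel b ∘ x) {w' | 0 < β b w'}) hw'
  · have hmem : ∃ w' ∈ {w' | 0 < β b w'}, (gridLabel b ∘ x) w' = gridLabel b (x w) := ⟨w, hw, rfl⟩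
    have h := dist_lt_one_of_gridLabel_eq hw (Function.invFunOn_mem hmem)
      (Function.invFunOn_eq hmem).symm
    rw [dist_smul₀, norm_inv, Real.norm_of_nonneg hε.le, inv_mul_lt_one₀ hε] at h
    exact hφ h

theorem IsCompressive.exists_approx_lift {D : Set (κ → ℝ)} [CompactSpace D] [Nonempty D]
    {X Y : Type*} [TopologicalSpace X] [PseudoMetricSpace Y] {f : X → Y} (hf : Continuous f)
    (hcomp : IsCompressive f) (φ : C(D, Y)) {A O : Set D} (hA : IsClosed A) (hO : IsOpen O)
    (hAO : A ⊆ O) {g : D → X} (hg : ContinuousOn g O) (hgA : ∀ w ∈ A, f (g w) = φ w) {δ : ℝ}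
    (hδ : 0 < δ) : ∃ Ψ : C(D, X), EqOn Ψ g A ∧ ∀ w, dist (f (Ψ w)) (φ w) < δ := by
  classical
  cases nonempty_fintype κ
  obtain ⟨η, hη, hglue⟩ := hcomp.exists_glue_finset hf φ (Finset.univ : Finset (κ → Bool)) hδ
  obtain ⟨β, a, hβ, hcover⟩ := exists_patches φ hη
  let O' := O ∩ (fun w => dist (f (g w)) (φ w)) ⁻¹' Iio η
  have hO' : IsOpen O' :=
    (continuous_dist.comp_continuousOn ((hf.comp_continuousOn hg).prodMk
      φ.continuous.continuousOn)).isOpen_inter_preimage hO isOpen_Iio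
  have hAO' : A ⊆ O' := fun w hw => ⟨hAO hw, by simpa [hgA w hw] using hη⟩
  obtain ⟨k, hkA, hkO', hk⟩ := exists_continuous_zero_one_of_isClosed hA hO'.isClosed_compl
    (disjoint_compl_right_iff_subset.2 hAO')
  obtain ⟨Ψ, hΨ, hΨg⟩ := hglue O' g (fun b w => k w * β b w) a hO'
    ⟨hg.mono inter_subset_left, fun w hw => hw.2⟩
    fun b _ => (hβ b).mul k.continuous fun w => (hk w).1
  have huniv : O' ∪ ⋃ b ∈ Finset.univ, {w | 1 / 2 < k w * β b w} = univ := by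
    refine eq_univ_of_forall fun w => or_iff_not_imp_left.2 fun hw => ?_
    obtain ⟨b, hb⟩ := hcover w
    refine mem_biUnion (Finset.mem_coe.2 (Finset.mem_univ b)) ?_
    simpa [show k w = 1 from hkO' hw] using hb
  rw [huniv] at hΨ
  exact ⟨⟨Ψ, continuousOn_univ.1 hΨ.continuousOn⟩,
    fun w hw => hΨg w (hAO' hw) fun b _ => by simp [show k w = 0 from hkA hw],
    fun w => hΨ.dist_lt w (mem_univ w)⟩

end Patches

/-- The relative lifting problem for `p` on the pair `(K, A)` is always solvable: any map `h` on `K`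
lifts through `p`, by a lift extending a given one `u` on `A`. -/
def LiftsRel {T E Y : Type*} [TopologicalSpace T] [TopologicalSpace E] [TopologicalSpace Y]
    (p : E → Y) (K A : Set T) : Prop :=
  ∀ (h : T → Y) (u : T → E), ContinuousOn h K → ContinuousOn u A → (∀ z ∈ A, p (u z) = h z) →
    ∃ G : T → E, ContinuousOn G K ∧ EqOn G u A ∧ ∀ z ∈ K, p (G z) = h z

/-- Strict lifting of disks relative to their boundary spheres, as for an acyclic fibration.
The disks are cubes: `Fin n → ℝ` carries the supremum norm. -/
def HasDiskLifting {E Y : Type*} [TopologicalSpace E] [TopologicalSpace Y] (p : E → Y) : Prop :=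
  ∀ n : ℕ, LiftsRel p (closedBall (0 : Fin n → ℝ) 1) (sphere 0 1)

theorem exists_retraction_cylinder (V : Type*) [SeminormedAddCommGroup V] [NormedSpace ℝ V] :
    ∃ ρ : C(closedBall (0 : V) 1 × I, V × I),
      (∀ q, ρ q ∈ closedBall 0 1 ×ˢ {1} ∪ sphere 0 1 ×ˢ univ) ∧ (∀ z, ρ (z, 1) = (z.1, 1)) ∧
        ∀ z s, z.1 ∈ sphere 0 1 → ρ (z, s) = (z.1, s) := by
  let m (q : closedBall (0 : V) 1 × I) : ℝ := max ‖q.1.1‖ ((1 + q.2) / 2)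
  have hm (q) : 0 < m q := lt_max_of_lt_right (by linarith [q.2.2.1])
  -- Radial projection from a point above the center of the cylinder.
  let ρ (q : closedBall (0 : V) 1 × I) : V × I :=
    ((m q)⁻¹ • q.1.1, projIcc 0 1 zero_le_one (q.2 + 2 * (1 - ‖q.1.1‖)))
  have hρ : Continuous ρ := by
    have : Continuous m := by fun_prop
    have : Continuous fun q => (m q)⁻¹ := this.inv₀ fun q => (hm q).ne'
    fun_prop
  have norm_fst (q) : ‖(ρ q).1‖ = ‖q.1.1‖ / m q := by
    rw [norm_smul, norm_inv, Real.norm_of_nonneg (hm q).le, inv_mul_eq_div]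
  refine ⟨⟨ρ, hρ⟩, fun q => ?_, fun z => ?_, fun z s hz => ?_⟩
  · rcases le_total ‖q.1.1‖ ((1 + q.2) / 2) with hle | hge
    · refine Or.inl ⟨mem_closedBall_zero_iff.2 ?_, projIcc_of_right_le zero_le_one (by linarith)⟩
      exact (norm_fst q).trans_le ((div_le_one (hm q)).2 (le_max_left _ _))
    · have hmq : m q = ‖q.1.1‖ := max_eq_left hge
      exact Or.inr ⟨mem_sphere_zero_iff_norm.2 ((norm_fst q).trans (by
        rw [hmq, div_self (hmq ▸ hm q).ne'])), mem_univ _⟩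
  · have hz : ‖z.1‖ ≤ 1 := mem_closedBall_zero_iff.1 z.2
    have hmz : m (z, 1) = 1 := by
      simp only [m, Icc.coe_one, add_self_div_two, max_eq_right hz]
    exact Prod.ext (by simp only [ContinuousMap.coe_mk, ρ, hmz, inv_one, one_smul])
      (projIcc_of_right_le zero_le_one (by simpa using hz))
  · have hz₁ : ‖z.1‖ = 1 := mem_sphere_zero_iff_norm.1 hz
    have hmz : m (z, s) = 1 := (max_eq_left (by linarith [s.2.2])).trans hz₁
    simp only [ContinuousMap.coe_mk, ρ, hmz, hz₁, inv_one, one_smul, sub_self, mul_zero, add_zero,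
      projIcc_val]

theorem exists_homotopy_extension_closedBall {V Y : Type*} [SeminormedAddCommGroup V]
    [NormedSpace ℝ V] [TopologicalSpace Y] {h : V → Y} {γ : V × I → Y}
    (hh : ContinuousOn h (closedBall 0 1)) (hγ : ContinuousOn γ (sphere 0 1 ×ˢ univ))
    (hγh : ∀ z ∈ sphere (0 : V) 1, γ (z, 1) = h z) :
    ∃ K : C(closedBall (0 : V) 1 × I, Y), (∀ z, K (z, 1) = h z) ∧
      ∀ z s, z.1 ∈ sphere (0 : V) 1 → K (z, s) = γ (z, s) := by
  classical
  let Φ (q : V × I) : Y := if q.2 = 1 then h q.1 else γ q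
  have hΦγ : EqOn Φ γ (sphere 0 1 ×ˢ univ) := by
    rintro ⟨z, s⟩ ⟨hz, -⟩
    rcases eq_or_ne s 1 with rfl | hs
    · exact (if_pos rfl).trans (hγh z hz).symm
    · exact if_neg hs
  have hΦ : ContinuousOn Φ (closedBall 0 1 ×ˢ {1} ∪ sphere 0 1 ×ˢ univ) :=
    ((hh.comp continuousOn_fst fun q hq => hq.1).congr fun q hq => if_pos hq.2).union_of_isClosed
      (hγ.congr hΦγ) (isClosed_closedBall.prod isClosed_singleton)
      (isClosed_sphere.prod isClosed_univ)
  obtain ⟨ρ, hρ, hρ₁, hρs⟩ := exists_retraction_cylinder V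
  refine ⟨⟨Φ ∘ ρ, hΦ.comp_continuous ρ.continuous hρ⟩, fun z => ?_, fun z s hz => ?_⟩
  · exact (congrArg Φ (hρ₁ z)).trans (if_pos rfl)
  · exact (congrArg Φ (hρs z s hz)).trans (hΦγ ⟨hz, mem_univ s⟩)

section MappingPathSpace

variable {X Y : Type*} [TopologicalSpace X] [TopologicalSpace Y]

/-- The space of pairs of a point `x` and a path starting at `f x`; up to homotopy, it replaces `f`
by the map `MappingPathSpace.endpoint`, which has strict rather than approximate lifts. -/
abbrev MappingPathSpace (f : C(X, Y)) : Type _ := {q : X × C(I, Y) // q.2 0 = f q.1}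

namespace MappingPathSpace

variable (f : C(X, Y))

/-- The projection to the domain of `f`, a homotopy inverse of `MappingPathSpace.const`. -/
def fst : C(MappingPathSpace f, X) := ⟨fun q => q.1.1, by fun_prop⟩

/-- The map sending a path to its endpoint. -/
def endpoint : C(MappingPathSpace f, Y) := ⟨fun q => q.1.2 1, by fun_prop⟩

/-- The inclusion of the domain of `f` as the constant paths. -/
def const : C(X, MappingPathSpace f) :=
  ⟨fun x => ⟨(x, ContinuousMap.const I (f x)), rfl⟩,
    (continuous_id.prodMk (ContinuousMap.continuous_const'.comp f.continuous)).subtype_mk _⟩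

theorem fst_comp_const : (fst f).comp (const f) = ContinuousMap.id X := rfl

theorem endpoint_comp_const : (endpoint f).comp (const f) = f := rfl

theorem comp_fst_homotopic_endpoint : (f.comp (fst f)).Homotopic (endpoint f) :=
  ⟨⟨⟨fun p => p.2.1.2 p.1, by fun_prop⟩, fun q => q.2, fun _ => rfl⟩⟩

end MappingPathSpace

end MappingPathSpace

theorem IsCompressive.exists_approx_lift_closedBall {κ X Y : Type*} [Fintype κ]
    [TopologicalSpace X] [PseudoMetricSpace Y] {f : X → Y} (hf : Continuous f)
    (hcomp : IsCompressive f) (φ : C(closedBall (0 : κ → ℝ) 1, Y)) {x : (κ → ℝ) → X}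
    (hx : ContinuousOn x (sphere 0 1))
    (hfx : ∀ z : closedBall 0 1, z.1 ∈ sphere 0 1 → f (x z) = φ z) {δ : ℝ} (hδ : 0 < δ) :
    ∃ Ψ : C(closedBall (0 : κ → ℝ) 1, X),
      (∀ z, z.1 ∈ sphere 0 1 → Ψ z = x z) ∧ ∀ z, dist (f (Ψ z)) (φ z) < δ := by
  have : Nonempty (closedBall (0 : κ → ℝ) 1) := ⟨0, by simp⟩
  let radial (z : closedBall (0 : κ → ℝ) 1) : κ → ℝ := ‖z.1‖⁻¹ • z.1
  have radial_eq (z) (hz : z.1 ∈ sphere 0 1) : radial z = z := by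
    simp only [radial, mem_sphere_zero_iff_norm.1 hz, inv_one, one_smul]
  have continuousOn_radial : ContinuousOn radial {z | z.1 ≠ 0} := by
    have : ContinuousOn (fun z : closedBall (0 : κ → ℝ) 1 => ‖z.1‖⁻¹) {z | z.1 ≠ 0} :=
      ContinuousOn.inv₀ (by fun_prop) fun z hz => norm_ne_zero_iff.2 hz
    fun_prop
  obtain ⟨Ψ, hΨx, hΨ⟩ := hcomp.exists_approx_lift hf φ (A := {z | z.1 ∈ sphere 0 1})
    (O := {z | z.1 ≠ 0}) (g := x ∘ radial) (isClosed_sphere.preimage continuous_subtype_val)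
    (isOpen_compl_singleton.preimage continuous_subtype_val)
    (fun z hz => ne_zero_of_mem_unit_sphere ⟨z.1, hz⟩)
    (hx.comp continuousOn_radial fun z hz =>
      mem_sphere_zero_iff_norm.2 (norm_smul_inv_norm (𝕜 := ℝ) hz))
    (fun z hz => by rw [Function.comp_apply, radial_eq z hz, hfx z hz]) hδ
  exact ⟨Ψ, fun z hz => (hΨx hz).trans (congrArg x (radial_eq z hz)), hΨ⟩

theorem IsCompressive.hasDiskLifting_endpoint {X : Type*} {Y : Type u} [TopologicalSpace X]
    [MetricSpace Y] (hY : IsANR Y) {f : C(X, Y)} (hcomp : IsCompressive f) :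
    HasDiskLifting (MappingPathSpace.endpoint f) := by
  intro n h u hh hu huh
  have : Nonempty Y := ⟨h 0⟩
  let x (z : Fin n → ℝ) : X := MappingPathSpace.fst f (u z)
  let γ (q : (Fin n → ℝ) × I) : Y := (u q.1).1.2 q.2
  have hγ : ContinuousOn γ (sphere 0 1 ×ˢ univ) := by
    have : ContinuousOn (fun q : (Fin n → ℝ) × I => (u q.1, q.2)) (sphere 0 1 ×ˢ univ) :=
      (hu.comp continuousOn_fst fun q hq => hq.1).prodMk continuousOn_snd
    exact Continuous.comp_continuousOn
      (g := fun r : MappingPathSpace f × I => r.1.1.2 r.2) (by fun_prop) this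
  obtain ⟨K, hK₁, hKγ⟩ := exists_homotopy_extension_closedBall hh hγ huh
  have hfx (z : closedBall (0 : Fin n → ℝ) 1) (hz : z.1 ∈ sphere 0 1) : f (x z) = K (z, 0) :=
    (u z).2.symm.trans (hKγ z 0 hz).symm
  obtain ⟨δ, hδ, hperturb⟩ := hY.exists_perturbed_homotopy K
  obtain ⟨Ψ, hΨx, hΨ⟩ := hcomp.exists_approx_lift_closedBall f.continuous
    ⟨fun z => K (z, 0), by fun_prop⟩
    ((MappingPathSpace.fst f).continuous.comp_continuousOn hu) hfx hδ
  obtain ⟨K', hK'₀, hK'₁, hK'⟩ := hperturb (f.comp Ψ) hΨ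
  let G : C(closedBall (0 : Fin n → ℝ) 1, MappingPathSpace f) :=
    ⟨fun z => ⟨(Ψ z, K'.curry z), hK'₀ z⟩, by fun_prop⟩
  have extend_G (z) : Function.extend (↑) G u z.1 = G z := Subtype.val_injective.extend_apply _ _ z
  refine ⟨Function.extend (↑) G u, ?_, fun z hz => ?_, fun z hz => ?_⟩
  · exact continuousOn_iff_continuous_domRestrict.2 (G.continuous.congr fun z => (extend_G z).symm)
  · lift z to closedBall (0 : Fin n → ℝ) 1 using sphere_subset_closedBall hz
    have hfΨ : f (Ψ z) = K (z, 0) := (congrArg f (hΨx z hz)).trans (hfx z hz)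
    rw [extend_G]
    refine Subtype.ext (Prod.ext (hΨx z hz) (ContinuousMap.ext fun s => ?_))
    exact (hK' z hfΨ s).trans (hKγ z s hz)
  · lift z to closedBall (0 : Fin n → ℝ) 1 using hz
    rw [extend_G]
    exact (hK'₁ z).trans (hK₁ z)

theorem LiftsRel.of_chart {T T' E Y : Type*} [TopologicalSpace T] [TopologicalSpace T']
    [TopologicalSpace E] [TopologicalSpace Y] {p : E → Y} {K A : Set T} {K' A' : Set T'}
    (h : LiftsRel p K' A') {α : T' → T} {β : T → T'} (hα : ContinuousOn α K')
    (hβ : ContinuousOn β K) (hαK : MapsTo α K' K) (hαA : MapsTo α A' A) (hβK : MapsTo β K K')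
    (hβA : MapsTo β A A') (hA : A ⊆ K) (hA' : A' ⊆ K') (hαβ : LeftInvOn α β K) :
    LiftsRel p K A := by
  intro y u hy hu huy
  obtain ⟨G, hG, hGu, hGy⟩ := h (y ∘ α) (u ∘ α) (hy.comp hα hαK) (hu.comp (hα.mono hA') hαA)
    fun z hz => huy _ (hαA hz)
  exact ⟨G ∘ β, hG.comp hβ hβK,
    fun z hz => (hGu (hβA hz)).trans (congrArg u (hαβ (hA hz))),
    fun z hz => (hGy _ (hβK hz)).trans (congrArg y (hαβ hz))⟩

theorem HasDiskLifting.liftsRel_convex {E Y F : Type*} [TopologicalSpace E] [TopologicalSpace Y]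
    [NormedAddCommGroup F] [NormedSpace ℝ F] [FiniteDimensional ℝ F] {p : E → Y}
    (hp : HasDiskLifting p) {K : Set F} (hc : Convex ℝ K) (hclosed : IsClosed K)
    (hb : Bornology.IsBounded K) (hne : (interior K).Nonempty) : LiftsRel p K (frontier K) := by
  let e := (Module.finBasis ℝ F).equivFunL
  obtain ⟨Φ, -, hΦK, hΦfr⟩ := exists_homeomorph_image_interior_closure_frontier_eq_unitBall
    (hc.linear_image e.toLinearMap)
    (e.toHomeomorph.image_interior K ▸ hne.image e) (e.lipschitz.isBounded_image hb)
  let Ψ := e.toHomeomorph.trans Φ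
  have hfr : Ψ '' frontier K = sphere 0 1 :=
    (image_comp Φ e _).trans ((congrArg _ (e.toHomeomorph.image_frontier K)).trans hΦfr)
  have hK : Ψ '' K = closedBall 0 1 := by
    rw [← hΦK]
    refine (image_comp Φ e K).trans (congrArg _ (IsClosed.closure_eq ?_).symm)
    exact e.toHomeomorph.isClosed_image.2 hclosed
  refine (hp _).of_chart Ψ.symm.continuous.continuousOn Ψ.continuous.continuousOn ?_ ?_
    (mapsTo_iff_image_subset.2 hK.subset) (mapsTo_iff_image_subset.2 hfr.subset)
    hclosed.frontier_subset sphere_subset_closedBall fun x _ => Ψ.symm_apply_apply x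
  · rw [← hK]
    exact mapsTo_image_iff.2 ((mapsTo_id _).congr fun x _ => (Ψ.symm_apply_apply x).symm)
  · rw [← hfr]
    exact mapsTo_image_iff.2 ((mapsTo_id _).congr fun x _ => (Ψ.symm_apply_apply x).symm)

section Cell

variable {ι : Type*}

/-- The face spanned by `s` of the simplex with vertex set `ι`, in barycentric coordinates. -/
def simplexFace (s : Finset ι) : Set (ι → ℝ) :=
  {w | (∀ i, 0 ≤ w i) ∧ (∀ i ∉ s, w i = 0) ∧ ∑ i ∈ s, w i = 1}

theorem isClosed_simplexFace (s : Finset ι) : IsClosed (simplexFace s) := by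
  simp only [simplexFace, ofPred_and, ofPred_forall]
  exact (isClosed_iInter fun i => isClosed_le continuous_const (continuous_apply i)).inter
    ((isClosed_iInter fun i => isClosed_iInter fun _ =>
      isClosed_eq (continuous_apply i) continuous_const).inter
    (isClosed_eq (by fun_prop) continuous_const))

theorem nonempty_of_mem_simplexFace {s : Finset ι} {w : ι → ℝ} (hw : w ∈ simplexFace s) :
    s.Nonempty :=
  Finset.nonempty_of_sum_ne_zero (hw.2.2.trans_ne one_ne_zero)

theorem mem_simplexFace_of_subset {s t : Finset ι} {w : ι → ℝ} (hw : w ∈ simplexFace s)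
    (hts : t ⊆ s) (h : ∀ i ∈ s, w i ≠ 0 → i ∈ t) : w ∈ simplexFace t := by
  have ht : ∀ i ∉ t, w i = 0 := fun i hi => by
    by_contra hwi
    exact hi (h i (by_contra fun his => hwi (hw.2.1 i his)) hwi)
  exact ⟨hw.1, ht, (Finset.sum_subset hts fun i _ => ht i).trans hw.2.2⟩

variable (V : Type*) [NormedAddCommGroup V]

/-- The product of the simplex face spanned by `s` with the closed unit ball of `V`. -/
def cell (s : Finset ι) : Set ((ι → ℝ) × V) := simplexFace s ×ˢ closedBall 0 1

/-- The boundary of the topological disk `cell V s`. -/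
def cellBoundary (s : Finset ι) : Set ((ι → ℝ) × V) :=
  {z ∈ cell V s | (∃ i ∈ s, z.1 i = 0) ∨ z.2 ∈ sphere 0 1}

theorem isClosed_cell (s : Finset ι) : IsClosed (cell V s) :=
  (isClosed_simplexFace s).prod isClosed_closedBall

theorem exists_simplexFace_chart {F : Type*} [NormedAddCommGroup F] [NormedSpace ℝ F]
    [FiniteDimensional ℝ F] {s : Finset ι} (b : AffineBasis s ℝ F) :
    ∃ (α : C(F, ι → ℝ)) (β : C(ι → ℝ, F)), (∀ x (i : s), α x i = b.coord i x) ∧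
      MapsTo α (convexHull ℝ (range b)) (simplexFace s) ∧ LeftInvOn α β (simplexFace s) := by
  classical
  let α (x : F) (i : ι) : ℝ := if hi : i ∈ s then b.coord ⟨i, hi⟩ x else 0
  have hα (x) (i : s) : α x i = b.coord i x := dif_pos i.2
  have hαc : Continuous α := continuous_pi fun i => by
    by_cases hi : i ∈ s
    · simpa only [α, dif_pos hi] using continuous_barycentric_coord b ⟨i, hi⟩
    · simpa only [α, dif_neg hi] using continuous_const
  refine ⟨⟨α, hαc⟩, ⟨fun w => ∑ i : s, w i • b i, by fun_prop⟩, hα, fun x hx => ?_, fun w hw => ?_⟩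
  · rw [b.convexHull_eq_nonneg_coord] at hx
    refine ⟨fun i => ?_, fun i hi => dif_neg hi, ?_⟩
    · by_cases hi : i ∈ s
      · exact (hx ⟨i, hi⟩).trans_eq (Eq.symm (hα x ⟨i, hi⟩))
      · exact (dif_neg hi : α x i = 0).ge
    · rw [← b.sum_coord_apply_eq_one x, ← Finset.sum_coe_sort]
      exact Finset.sum_congr rfl fun i _ => hα x i
  · have hsum : ∑ i : s, w i = 1 := (Finset.sum_coe_sort s w).trans hw.2.2
    funext i
    by_cases hi : i ∈ s
    · refine (hα _ ⟨i, hi⟩).trans ?_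
      rw [ContinuousMap.coe_mk, ← Finset.affineCombination_eq_linear_combination _ b _ hsum,
        b.coord_apply_combination_of_mem (Finset.mem_univ _) hsum]
    · exact (dif_neg hi).trans (hw.2.1 i hi).symm

variable {V}

theorem mem_frontier_convexHull_prod_closedBall [NormedSpace ℝ V] {κ F : Type*} [Finite κ]
    [NormedAddCommGroup F] [NormedSpace ℝ F] (b : AffineBasis κ ℝ F) {x : F × V} :
    x ∈ frontier (convexHull ℝ (range b) ×ˢ closedBall (0 : V) 1) ↔
      x ∈ convexHull ℝ (range b) ×ˢ closedBall (0 : V) 1 ∧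
        ((∃ i, b.coord i x.1 = 0) ∨ x.2 ∈ sphere 0 1) := by
  rw [(((finite_range b).isClosed_convexHull ℝ).prod isClosed_closedBall).frontier_eq,
    Set.mem_sdiff, interior_prod_eq, b.interior_convexHull, interior_closedBall 0 one_ne_zero,
    mem_prod, mem_prod, not_and_or]
  refine and_congr_right fun hx => or_congr ?_ ?_
  · have hnonneg : ∀ i, 0 ≤ b.coord i x.1 := (b.convexHull_eq_nonneg_coord ▸ hx.1 :)
    simp only [mem_ofPred_eq, not_forall, not_lt]
    exact exists_congr fun i => ⟨fun h => h.antisymm (hnonneg i), fun h => h.le⟩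
  · rw [mem_ball, mem_sphere, not_lt]
    exact ⟨fun h => le_antisymm hx.2 h, fun h => h.ge⟩

theorem HasDiskLifting.liftsRel_cell_of_affineBasis {E Y F : Type*} [TopologicalSpace E]
    [TopologicalSpace Y] [NormedSpace ℝ V] [FiniteDimensional ℝ V]
    [NormedAddCommGroup F] [NormedSpace ℝ F] [FiniteDimensional ℝ F] {p : E → Y}
    (hp : HasDiskLifting p) {s : Finset ι} (b : AffineBasis s ℝ F) :
    LiftsRel p (cell V s) (cellBoundary V s) := by
  have hK : IsCompact (convexHull ℝ (range b) ×ˢ closedBall (0 : V) 1) :=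
    ((finite_range b).isCompact_convexHull ℝ).prod (isCompact_closedBall _ _)
  have hne : (interior (convexHull ℝ (range b) ×ˢ closedBall (0 : V) 1)).Nonempty := by
    rw [interior_prod_eq, interior_closedBall 0 one_ne_zero]
    exact ⟨(_, 0), b.centroid_mem_interior_convexHull, mem_ball_self one_pos⟩
  obtain ⟨α, β, hα, hαK, hαβ⟩ := exists_simplexFace_chart b
  have hβ {w} (hw : w ∈ simplexFace s) (i : s) : b.coord i (β w) = w i := by
    rw [← hα, hαβ hw]
  have hβK : MapsTo β (simplexFace s) (convexHull ℝ (range b)) := fun w hw => by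
    rw [b.convexHull_eq_nonneg_coord]
    exact fun i => (hw.1 i).trans_eq (hβ hw i).symm
  refine (hp.liftsRel_convex ((convex_convexHull ℝ _).prod (convex_closedBall _ _))
    hK.isClosed hK.isBounded hne).of_chart (α := Prod.map α id) (β := Prod.map β id)
    (by fun_prop) (by fun_prop) (hαK.prodMap (mapsTo_id _)) (fun x hx => ?_)
    (hβK.prodMap (mapsTo_id _)) (fun z hz => ?_) (sep_subset _ _) hK.isClosed.frontier_subset
    (fun z hz => Prod.ext (hαβ hz.1) rfl)
  · obtain ⟨hxK, hx⟩ := (mem_frontier_convexHull_prod_closedBall b).1 hx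
    exact ⟨hαK.prodMap (mapsTo_id _) hxK,
      hx.imp_left fun ⟨i, hi⟩ => ⟨i, i.2, (hα _ i).trans hi⟩⟩
  · exact (mem_frontier_convexHull_prod_closedBall b).2 ⟨hβK.prodMap (mapsTo_id _) hz.1,
      hz.2.imp_left fun ⟨i, hi, h⟩ => ⟨⟨i, hi⟩, (hβ hz.1.1 ⟨i, hi⟩).trans h⟩⟩

theorem HasDiskLifting.liftsRel_cell {E Y : Type*} [TopologicalSpace E]
    [TopologicalSpace Y] [NormedSpace ℝ V] [FiniteDimensional ℝ V] {p : E → Y}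
    (hp : HasDiskLifting p) (s : Finset ι) : LiftsRel p (cell V s) (cellBoundary V s) := by
  rcases s.eq_empty_or_nonempty with rfl | hs
  · have hcell : cell V (∅ : Finset ι) = ∅ :=
      eq_empty_of_forall_notMem fun z hz => (nonempty_of_mem_simplexFace hz.1).ne_empty rfl
    exact fun y u _ _ _ => ⟨u, hcell ▸ continuousOn_empty _, fun _ _ => rfl, hcell ▸ by simp⟩
  · have hcard : Fintype.card s = Module.finrank ℝ (Fin (s.card - 1) → ℝ) + 1 := by
      rw [Module.finrank_fin_fun, Fintype.card_coe, Nat.sub_add_cancel hs.card_pos]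
    obtain ⟨b⟩ :=
      AffineBasis.exists_affineBasis_of_finiteDimensional (P := Fin (s.card - 1) → ℝ) hcard
    exact hp.liftsRel_cell_of_affineBasis b

end Cell

section Nerve

variable {ι : Type*}

open scoped Classical in
/-- The vertex set of the open face containing `w`; junk value `∅` if `w` has infinite support. -/
noncomputable def carrier (w : ι → ℝ) : Finset ι :=
  if hw : (Function.support w).Finite then hw.toFinset else ∅

theorem mem_carrier {s : Finset ι} {w : ι → ℝ} (hw : w ∈ simplexFace s) {i : ι} :
    i ∈ carrier w ↔ w i ≠ 0 := by
  have hfin : (Function.support w).Finite :=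
    s.finite_toSet.subset fun i hi => by_contra fun his => hi (hw.2.1 i his)
  rw [carrier, dif_pos hfin, hfin.mem_toFinset, Function.mem_support]

theorem carrier_subset {s : Finset ι} {w : ι → ℝ} (hw : w ∈ simplexFace s) : carrier w ⊆ s :=
  fun i hi => by_contra fun his => (mem_carrier hw).1 hi (hw.2.1 i his)

theorem mem_simplexFace_carrier {s : Finset ι} {w : ι → ℝ} (hw : w ∈ simplexFace s) :
    w ∈ simplexFace (carrier w) :=
  mem_simplexFace_of_subset hw (carrier_subset hw) fun _ _ hi => (mem_carrier hw).2 hi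

variable {V : Type*} [NormedAddCommGroup V]

theorem carrier_ssubset_iff {s : Finset ι} {z : (ι → ℝ) × V} (hz : z ∈ cell V s)
    (hz₂ : z.2 ∉ sphere 0 1) : carrier z.1 ⊂ s ↔ z ∈ cellBoundary V s := by
  rw [Finset.ssubset_iff_of_subset (carrier_subset hz.1)]
  simp only [mem_carrier hz.1, not_not, cellBoundary, mem_ofPred_eq, hz, hz₂, or_false, true_and]

theorem continuousOn_cellBoundary {E : Type*} [TopologicalSpace E] {s : Finset ι}
    {G : (ι → ℝ) × V → E} (hsphere : ContinuousOn G (simplexFace s ×ˢ sphere 0 1))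
    (hface : ∀ t ⊂ s, ContinuousOn G (cell V t)) : ContinuousOn G (cellBoundary V s) := by
  classical
  let A (o : Option s) : Set ((ι → ℝ) × V) :=
    o.elim (simplexFace s ×ˢ sphere 0 1) fun i => cell V (s.erase i)
  have hA : ContinuousOn G (⋃ o, A o) := by
    refine (locallyFinite_of_finite A).continuousOn_iUnion ?_ ?_
    · rintro (_ | i)
      exacts [(isClosed_simplexFace s).prod isClosed_sphere, isClosed_cell V _]
    · rintro (_ | i)
      exacts [hsphere, hface _ (Finset.erase_ssubset i.2)]
  refine hA.mono ?_
  rintro z ⟨hz, ⟨i, hi, hzi⟩ | hz₂⟩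
  · refine mem_iUnion.2 ⟨some ⟨i, hi⟩, mem_simplexFace_of_subset hz.1 (Finset.erase_subset i s)
      fun j hj hzj => Finset.mem_erase.2 ⟨?_, hj⟩, hz.2⟩
    rintro rfl
    exact hzj hzi
  · exact mem_iUnion.2 ⟨none, hz.1, hz₂⟩

/-- A map can be defined cell by cell, given a rule `H` that fills in `cell V s` from the values
`B s` already defined on its boundary. -/
theorem exists_cellwise_recursion {E : Type*} (u : (ι → ℝ) × V → E)
    (H : Finset ι → ((ι → ℝ) × V → E) → (ι → ℝ) × V → E) :
    ∃ (G : (ι → ℝ) × V → E) (B : Finset ι → (ι → ℝ) × V → E), (∀ z, z.2 ∈ sphere 0 1 → G z = u z) ∧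
      (∀ s, EqOn (B s) G (cellBoundary V s)) ∧
      ∀ s, ∀ z ∈ cell V s \ cellBoundary V s, G z = H s (B s) z := by
  classical
  let F : Finset ι → (ι → ℝ) × V → E := Finset.strongInduction fun s F =>
    H s fun z => if hz : z.2 ∉ sphere 0 1 ∧ carrier z.1 ⊂ s then F (carrier z.1) hz.2 z else u z
  let B (s : Finset ι) (z : (ι → ℝ) × V) : E :=
    if z.2 ∉ sphere 0 1 ∧ carrier z.1 ⊂ s then F (carrier z.1) z else u z
  have hF (s) : F s = H s (B s) := Finset.strongInduction_eq _ s
  refine ⟨fun z => if z.2 ∈ sphere 0 1 then u z else F (carrier z.1) z, B, fun z hz => if_pos hz,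
    fun s z hz => ?_, fun s z hz => ?_⟩
  · by_cases hz₂ : z.2 ∈ sphere 0 1
    · exact (if_neg fun hz' => hz'.1 hz₂).trans (if_pos hz₂).symm
    · exact (if_pos ⟨hz₂, (carrier_ssubset_iff hz.1 hz₂).2 hz⟩).trans (if_neg hz₂).symm
  · have hz₂ : z.2 ∉ sphere 0 1 := fun hz₂ => hz.2 ⟨hz.1, Or.inr hz₂⟩
    have hcar : carrier z.1 = s := (carrier_subset hz.1.1).eq_of_not_ssubset
      fun hlt => hz.2 ((carrier_ssubset_iff hz.1 hz₂).1 hlt)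
    exact (if_neg hz₂).trans (by rw [hcar, hF])

theorem HasDiskLifting.exists_lift_nerve {E Y : Type*} [TopologicalSpace E] [TopologicalSpace Y]
    [NormedSpace ℝ V] [FiniteDimensional ℝ V] {p : E → Y} (hp : HasDiskLifting p)
    {N : Set (Finset ι)} (hN : IsLowerSet N) {h : (ι → ℝ) × V → Y} {u : (ι → ℝ) × V → E}
    (hh : ∀ s ∈ N, ContinuousOn h (cell V s))
    (hu : ∀ s ∈ N, ContinuousOn u (simplexFace s ×ˢ sphere 0 1))
    (hpu : ∀ s ∈ N, ∀ z ∈ simplexFace s ×ˢ sphere (0 : V) 1, p (u z) = h z) :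
    ∃ G : (ι → ℝ) × V → E, (∀ s ∈ N, ContinuousOn G (cell V s) ∧ ∀ z ∈ cell V s, p (G z) = h z) ∧
      ∀ z, z.2 ∈ sphere 0 1 → G z = u z := by
  have fill (s : Finset ι) (B : (ι → ℝ) × V → E) : ∃ H : (ι → ℝ) × V → E, s ∈ N →
      ContinuousOn B (cellBoundary V s) → (∀ z ∈ cellBoundary V s, p (B z) = h z) →
      ContinuousOn H (cell V s) ∧ EqOn H B (cellBoundary V s) ∧ ∀ z ∈ cell V s, p (H z) = h z := by
    by_cases hs : s ∈ N ∧ ContinuousOn B (cellBoundary V s) ∧ ∀ z ∈ cellBoundary V s, p (B z) = h z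
    · obtain ⟨H, hH⟩ := hp.liftsRel_cell s h B (hh s hs.1) hs.2.1 hs.2.2
      exact ⟨H, fun _ _ _ => hH⟩
    · exact ⟨B, fun h₁ h₂ h₃ => absurd ⟨h₁, h₂, h₃⟩ hs⟩
  choose H hH using fill
  obtain ⟨G, B, hGu, hBG, hGH⟩ := exists_cellwise_recursion u H
  refine ⟨G, fun s => s.strongInductionOn fun s ih hs => ?_, hGu⟩
  have hG : ContinuousOn G (cellBoundary V s) := continuousOn_cellBoundary
    ((hu s hs).congr fun z hz => hGu z hz.2) fun t ht => (ih t ht (hN ht.subset hs)).1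
  have hpG : ∀ z ∈ cellBoundary V s, p (G z) = h z := fun z hz => by
    by_cases hz₂ : z.2 ∈ sphere 0 1
    · exact hGu z hz₂ ▸ hpu s hs z ⟨hz.1.1, hz₂⟩
    · have hlt := (carrier_ssubset_iff hz.1 hz₂).2 hz
      exact (ih _ hlt (hN hlt.subset hs)).2 z ⟨mem_simplexFace_carrier hz.1.1, hz.1.2⟩
  obtain ⟨hHc, hHB, hHp⟩ := hH s (B s) hs (hG.congr (hBG s)) fun z hz => hBG s hz ▸ hpG z hz
  have hGH : EqOn G (H s (B s)) (cell V s) := fun z hz => by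
    by_cases hzb : z ∈ cellBoundary V s
    · exact (hBG s hzb).symm.trans (hHB hzb).symm
    · exact hGH s z ⟨hz, hzb⟩
  exact ⟨hHc.congr hGH, fun z hz => hGH hz ▸ hHp z hz⟩

end Nerve

section PartitionOfUnityNerve

variable {ι W : Type*} [TopologicalSpace W]

/-- The simplices of the nerve of the supports of `φ`: a finite set of indices is a simplex when
the functions it labels are all nonzero at a common point. -/
def nerve (φ : PartitionOfUnity ι W univ) : Set (Finset ι) := {s | ∃ x, s ⊆ φ.finsupport x}

variable (φ : PartitionOfUnity ι W univ)

theorem isLowerSet_nerve : IsLowerSet (nerve φ) := fun _ _ hts ⟨x, hx⟩ => ⟨x, hts.trans hx⟩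

theorem finsupport_mem_nerve (x : W) : φ.finsupport x ∈ nerve φ := ⟨x, subset_rfl⟩

theorem mem_simplexFace_finsupport (x : W) : (φ · x) ∈ simplexFace (φ.finsupport x) :=
  ⟨fun i => φ.nonneg i x, fun i hi => by simpa [φ.mem_finsupport] using hi,
    φ.sum_finsupport (mem_univ x)⟩

theorem continuousOn_comp_partitionOfUnity {E V : Type*} [TopologicalSpace E]
    [NormedAddCommGroup V] {G : (ι → ℝ) × V → E} (hG : ∀ s ∈ nerve φ, ContinuousOn G (cell V s)) :
    ContinuousOn (fun q : W × V => G ((φ · q.1), q.2)) (univ ×ˢ closedBall 0 1) := by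
  have hΨ : Continuous fun q : W × V => ((φ · q.1), q.2) := by fun_prop
  rintro ⟨x, v⟩ hxv
  let A (t : {t // t ⊆ φ.fintsupport x ∧ t ∈ nerve φ}) : Set (W × V) :=
    (fun q : W × V => ((φ · q.1), q.2)) ⁻¹' cell V t.1
  have : Finite {t // t ⊆ φ.fintsupport x ∧ t ∈ nerve φ} :=
    ((φ.fintsupport x).powerset.finite_toSet.subset fun t ht => Finset.mem_powerset.2 ht.1)
  have hA : ContinuousOn (fun q : W × V => G ((φ · q.1), q.2)) (⋃ t, A t) :=
    (locallyFinite_of_finite A).continuousOn_iUnion (fun t => (isClosed_cell V _).preimage hΨ)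
      fun t => (hG t.1 t.2.2).comp hΨ.continuousOn fun _ hq => hq
  have hO : ∀ᶠ q in 𝓝 (x, v), φ.finsupport q.1 ⊆ φ.fintsupport x :=
    (continuous_fst.tendsto (x, v)).eventually (φ.eventually_finsupport_subset x)
  refine (continuousWithinAt_inter hO).1 ((hA.mono ?_) (x, v) ⟨hxv, hO.self_of_nhds⟩)
  rintro q ⟨hq, hqx⟩
  exact mem_iUnion.2
    ⟨⟨_, hqx, finsupport_mem_nerve φ q.1⟩, mem_simplexFace_finsupport φ q.1, hq.2⟩

end PartitionOfUnityNerve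

theorem exists_partitionOfUnity_convex {W F : Type*} [TopologicalSpace W] [T2Space W]
    [ParacompactSpace W] [NormedAddCommGroup F] [NormedSpace ℝ F] {e : W → F} (he : Continuous e)
    {U : Set F} (hU : IsOpen U) (heU : range e ⊆ U) :
    ∃ φ : PartitionOfUnity W W univ, ∀ x, ∃ C ⊆ U, Convex ℝ C ∧ e x ∈ C ∧
      ∀ i ∈ φ.finsupport x, e i ∈ C := by
  have hball (i : W) : ∃ ρ > 0, ball (e i) (2 * ρ) ⊆ U := by
    obtain ⟨ε, hε, hεU⟩ := Metric.isOpen_iff.1 hU (e i) (heU (mem_range_self i))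
    exact ⟨ε / 2, by positivity, by rwa [mul_div_cancel₀ _ two_ne_zero]⟩
  choose ρ hρ hρU using hball
  obtain ⟨φ, hφ⟩ := PartitionOfUnity.exists_isSubordinate isClosed_univ
    (fun i => e ⁻¹' ball (e i) (ρ i)) (fun i => isOpen_ball.preimage he)
    (fun x _ => mem_iUnion.2 ⟨x, mem_ball_self (hρ x)⟩)
  have hφρ {x i} (hi : i ∈ φ.finsupport x) : dist (e x) (e i) < ρ i :=
    hφ i (subset_tsupport _ ((φ.mem_finsupport x).1 hi))
  refine ⟨φ, fun x => ?_⟩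
  -- The largest of the balls around `x` has a double containing the centers of all the others.
  obtain ⟨m, hm, hmax⟩ := (φ.finsupport x).exists_max_image ρ
    (nonempty_of_mem_simplexFace (mem_simplexFace_finsupport φ x))
  refine ⟨ball (e m) (2 * ρ m), hρU m, convex_ball _ _, ?_, fun i hi => ?_⟩
  · exact mem_ball.2 (by linarith [hφρ hm, hρ m])
  · refine mem_ball.2 ((dist_triangle_left _ _ (e x)).trans_lt ?_)
    linarith [hφρ hi, hφρ hm, hmax i hi]

theorem IsANR.exists_nerve_domination {W : Type u} [MetricSpace W] [Nonempty W] (hW : IsANR W) :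
    ∃ (φ : PartitionOfUnity W W univ) (l : (W → ℝ) → W) (L : C(W, W)),
      (∀ s ∈ nerve φ, ContinuousOn l (simplexFace s)) ∧ (∀ x, L x = l (φ · x)) ∧
        (ContinuousMap.id W).Homotopic L := by
  obtain ⟨F, _, _, e, U, r, he, hU, heU, hr, hre⟩ := hW.exists_retraction
  obtain ⟨φ, hφ⟩ := exists_partitionOfUnity_convex he.continuous hU heU
  choose C hCU hC hxC hiC using hφ
  let S (w : W → ℝ) : F := ∑ᶠ i, w i • e i
  have hS {s : Finset W} {w : W → ℝ} (hw : w ∈ simplexFace s) : S w = ∑ i ∈ s, w i • e i :=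
    finsum_eq_sum_of_support_subset _ fun i hi => by_contra fun his =>
      hi (show w i • e i = 0 by rw [hw.2.1 i his, zero_smul])
  have hSC {x : W} {s : Finset W} (hs : s ⊆ φ.finsupport x) {w : W → ℝ} (hw : w ∈ simplexFace s) :
      S w ∈ C x :=
    hS hw ▸ (hC x).sum_mem (fun i _ => hw.1 i) hw.2.2 fun i hi => hiC x i (hs hi)
  let c : C(W, F) := ⟨fun x => S (φ · x),
    φ.continuous_finsum_smul (g := fun i _ => e i) fun _ _ _ => continuousAt_const⟩
  let T : C(I × W, F) := ⟨fun q => (1 - q.1 : ℝ) • e q.2 + (q.1 : ℝ) • c q.2, by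
    have := he.continuous
    fun_prop⟩
  have hTU (q : I × W) : T q ∈ U :=
    hCU q.2 (hC q.2 (hxC q.2) (hSC subset_rfl (mem_simplexFace_finsupport φ q.2))
      (sub_nonneg.2 q.1.2.2) q.1.2.1 (sub_add_cancel _ _))
  have hrT : Continuous fun q => r (T q) := hr.comp_continuous T.continuous hTU
  refine ⟨φ, fun w => r (S w), ⟨fun x => r (T (1, x)), hrT.comp (by fun_prop)⟩, ?_, fun x => ?_,
    ⟨⟨_, hrT⟩, fun x => ?_, fun x => rfl⟩⟩
  · rintro s ⟨x, hx⟩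
    have hSs : ContinuousOn S (simplexFace s) :=
      (Continuous.continuousOn (by fun_prop)).congr fun w hw => hS hw
    exact hr.comp hSs fun w hw => hCU x (hSC hx hw)
  · simp [T, c]
  · simpa [T] using hre x

section LiftingFromANR

variable {E Y : Type*} [TopologicalSpace E] [TopologicalSpace Y] {W : Type u} [MetricSpace W]
  [Nonempty W]

theorem HasDiskLifting.exists_relative_lift {p : E → Y} (hp : HasDiskLifting p) (hW : IsANR W)
    (V : Type*) [NormedAddCommGroup V] [NormedSpace ℝ V] [FiniteDimensional ℝ V] :
    ∃ L : C(W, W), (ContinuousMap.id W).Homotopic L ∧ ∀ (y : W × V → Y) (u : W × V → E),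
      ContinuousOn y (univ ×ˢ closedBall 0 1) → ContinuousOn u (univ ×ˢ sphere 0 1) →
      (∀ z ∈ univ ×ˢ sphere 0 1, p (u z) = y z) →
      ∃ G : W × V → E, ContinuousOn G (univ ×ˢ closedBall 0 1) ∧
        (∀ x, ∀ v ∈ closedBall 0 1, p (G (x, v)) = y (L x, v)) ∧
        ∀ x, ∀ v ∈ sphere 0 1, G (x, v) = u (L x, v) := by
  obtain ⟨φ, l, L, hl, hL, hLid⟩ := hW.exists_nerve_domination
  refine ⟨L, hLid, fun y u hy hu hpu => ?_⟩
  let Λ : (W → ℝ) × V → W × V := Prod.map l id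
  have hΛ {s} (hs : s ∈ nerve φ) (B : Set V) : ContinuousOn Λ (simplexFace s ×ˢ B) :=
    (hl s hs).prodMap continuousOn_id
  have hΛB (s : Finset W) (B : Set V) : MapsTo Λ (simplexFace s ×ˢ B) (univ ×ˢ B) :=
    fun z hz => ⟨mem_univ _, hz.2⟩
  obtain ⟨G, hG, hGu⟩ := hp.exists_lift_nerve (isLowerSet_nerve φ) (h := y ∘ Λ) (u := u ∘ Λ)
    (fun s hs => hy.comp (hΛ hs _) (hΛB s _)) (fun s hs => hu.comp (hΛ hs _) (hΛB s _))
    (fun s _ z hz => hpu _ (hΛB s _ hz))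
  refine ⟨fun z => G ((φ · z.1), z.2),
    continuousOn_comp_partitionOfUnity φ fun s hs => (hG s hs).1,
    fun x v hv => ?_, fun x v hv => ?_⟩
  · rw [hL]
    exact (hG _ (finsupport_mem_nerve φ x)).2 _ ⟨mem_simplexFace_finsupport φ x, hv⟩
  · rw [hL]
    exact hGu _ hv

theorem HasDiskLifting.exists_lift [Nonempty E] {p : C(E, Y)} (hp : HasDiskLifting p)
    (hW : IsANR W) (h : C(W, Y)) : ∃ g : C(W, E), (p.comp g).Homotopic h := by
  obtain ⟨L, hL, hlift⟩ := hp.exists_relative_lift hW Unit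
  have hsphere : sphere (0 : Unit) 1 = ∅ := sphere_eq_empty_of_subsingleton one_ne_zero
  obtain ⟨G, hG, hpG, -⟩ := hlift (fun z => h z.1) (fun _ => Classical.arbitrary E) (by fun_prop)
    continuousOn_const fun z hz => absurd hz.2 (hsphere ▸ notMem_empty z.2)
  have hball : (0 : Unit) ∈ closedBall 0 1 := mem_closedBall_self zero_le_one
  let g : C(W, E) :=
    ⟨fun x => G (x, 0), hG.comp_continuous (by fun_prop) fun _ => ⟨mem_univ _, hball⟩⟩
  have hpg : p.comp g = h.comp L := ContinuousMap.ext fun x => hpG x 0 hball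
  exact ⟨g, hpg ▸ (ContinuousMap.Homotopic.refl h).comp hL.symm⟩

theorem HasDiskLifting.homotopic_of_comp {p : C(E, Y)} (hp : HasDiskLifting p)
    (hW : IsANR W) {g₀ g₁ : C(W, E)} (hg : (p.comp g₀).Homotopic (p.comp g₁)) :
    g₀.Homotopic g₁ := by
  obtain ⟨L, hL, hlift⟩ := hp.exists_relative_lift hW ℝ
  obtain ⟨H⟩ := hg
  let u (z : W × ℝ) : E := if 0 < z.2 then g₁ z.1 else g₀ z.1
  have hu₁ (x) : u (x, 1) = g₁ x := if_pos one_pos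
  have hu₀ (x) : u (x, -1) = g₀ x := if_neg (by norm_num)
  have hu : ContinuousOn u (univ ×ˢ sphere 0 1) := by
    refine ContinuousOn.if (fun z hz => ?_) (by fun_prop) (by fun_prop)
    have hz₀ : 0 = z.2 := frontier_lt_subset_eq continuous_const continuous_snd hz.2
    exact absurd hz.1.2 (by simp [← hz₀])
  let π (t : ℝ) : I := projIcc 0 1 zero_le_one ((1 + t) / 2)
  have hπ : Continuous π := by fun_prop
  have hπ₀ : π (-1) = 0 := projIcc_of_le_left _ (by norm_num)
  have hπ₁ : π 1 = 1 := projIcc_of_right_le _ (by norm_num)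
  obtain ⟨G, hG, -, hGu⟩ := hlift (fun z => H (π z.2, z.1)) u (by fun_prop) hu (by
    rintro ⟨x, t⟩ ⟨-, ht⟩
    rcases eq_or_eq_neg_of_abs_eq (mem_sphere_zero_iff_norm.1 ht) with rfl | rfl
    · rw [hu₁, hπ₁, H.apply_one, ContinuousMap.comp_apply]
    · rw [hu₀, hπ₀, H.apply_zero, ContinuousMap.comp_apply])
  have hgL : (g₀.comp L).Homotopic (g₁.comp L) :=
    ⟨{ toFun := fun q => G (q.2, 2 * q.1 - 1)
       continuous_toFun := hG.comp_continuous (by fun_prop) fun q =>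
        ⟨mem_univ _, mem_closedBall_zero_iff.2
          (abs_le.2 ⟨by linarith [q.1.2.1], by linarith [q.1.2.2]⟩)⟩
       map_zero_left := fun x => by simp [hGu, hu₀]
       map_one_left := fun x => by norm_num [hGu, hu₁] }⟩
  have hgid (g : C(W, E)) : g.Homotopic (g.comp L) := (ContinuousMap.Homotopic.refl g).comp hL
  exact (hgid g₀).trans (hgL.trans (hgid g₁).symm)

end LiftingFromANR

theorem stmt_7_general {X P : Type*} {Y : Type v} [TopologicalSpace X] [Nonempty X]
    [MetricSpace P] (hP : IsANR P) (e : X ≃ₕ P) [MetricSpace Y] (hY : IsANR Y) (f : C(X, Y))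
    (hf : IsCompressive f) :
    ∃ g : C(Y, X), (f.comp g).Homotopic (ContinuousMap.id Y) ∧
      (g.comp f).Homotopic (ContinuousMap.id X) := by
  obtain ⟨x₀⟩ := ‹Nonempty X›
  have : Nonempty Y := ⟨f x₀⟩
  have : Nonempty P := ⟨e x₀⟩
  have : Nonempty (MappingPathSpace f) := ⟨MappingPathSpace.const f x₀⟩
  have hlift := IsCompressive.hasDiskLifting_endpoint hY hf
  obtain ⟨s, hs⟩ := hlift.exists_lift hY (ContinuousMap.id Y)
  let g := (MappingPathSpace.fst f).comp s
  let b := e.invFun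
  have hfg : (f.comp g).Homotopic (ContinuousMap.id Y) :=
    ((MappingPathSpace.comp_fst_homotopic_endpoint f).comp (.refl s)).trans hs
  have hconst : ((MappingPathSpace.const f).comp ((g.comp f).comp b)).Homotopic
      ((MappingPathSpace.const f).comp b) := hlift.homotopic_of_comp hP <| by
    simpa only [← ContinuousMap.comp_assoc, MappingPathSpace.endpoint_comp_const,
      ContinuousMap.id_comp] using (hfg.comp (.refl f)).comp (.refl b)
  have hgfb : ((g.comp f).comp b).Homotopic b := by
    simpa only [← ContinuousMap.comp_assoc, MappingPathSpace.fst_comp_const,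
      ContinuousMap.id_comp] using
      (ContinuousMap.Homotopic.refl (MappingPathSpace.fst f)).comp hconst
  exact ⟨g, hfg, ((ContinuousMap.Homotopic.refl (g.comp f)).comp e.left_inv.symm).trans
    ((hgfb.comp (.refl e.toFun)).trans e.left_inv)⟩

end

/-- **Theorem 2 (main).** If `X` is a connected space homotopy equivalent to a
separable metric ANR, `Y` is a metric ANR, and `f : X → Y` is a compressive
continuous surjection, then `f` is a homotopy equivalence. -/
theorem stmt_7 {X : Type u} {Y : Type v} [TopologicalSpace X] [MetricSpace Y]
    [ConnectedSpace X]
    (hX : ∃ (P : Type u) (_ : MetricSpace P), TopologicalSpace.SeparableSpace P ∧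
      IsANR P ∧ Nonempty (ContinuousMap.HomotopyEquiv X P))
    (hY : IsANR Y)
    (f : X → Y) (hfc : Continuous f) (hfs : Function.Surjective f)
    (hcomp : IsCompressive f) :
    ∃ g : C(Y, X),
      ((⟨f, hfc⟩ : C(X, Y)).comp g).Homotopic (ContinuousMap.id Y) ∧
      (g.comp (⟨f, hfc⟩ : C(X, Y))).Homotopic (ContinuousMap.id X) := by
  obtain ⟨P, _, -, hP, ⟨e⟩⟩ := hX
  exact stmt_7_general hP e hY ⟨f, hfc⟩ hcomp
end

section
/- Let Y be a metric space, X a topological space, and f : X → Y a compressive continuous surjection. Let K be a finite geometric simplicial complex in some finite-dimensional real vector space, J a subcomplex of K, and |K| and |J| their underlying polyhedra. Let g : |K| → Y be continuous and η : |J| → X continuous with f∘η = g restricted to |J|, and let W ⊆ Y × Y be a neighborhood of the diagonal {(y,y) : y ∈ Y}. Then there is a continuous extension γ : |K| → X of η such that (g(p), f(γ(p))) ∈ W for all p ∈ |K|. -/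
/-!
Call an approximate lift of `g` *extendable* from `A` to `Q` if every lift on `A` that is accurate
enough extends to a lift on `Q` of prescribed accuracy. For a compact convex set `C` in a
finite-dimensional space, lifts are extendable from the frontier of `C` to `C`, by induction on the
dimension. By compactness and Hahn–Banach, finitely many hyperplanes cut `C` into convex pieces on
each of which `g` varies little. The lift is first extended over the hyperplane sections, which have
smaller dimension; on each remaining piece, its values on the frontier lie over a small set `V'` for
which `f⁻¹(V')` contracts inside a small `f⁻¹(V)`, and coning off the frontier with this contraction
fills the piece. A finite simplicial complex is then obtained from a subcomplex by adjoining one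
simplex at a time along its frontier; since tolerances only have to be chosen for finitely many
steps, they can be fixed backwards from the last one.
-/

open Set Filter Topology Uniformity
open Metric (sphere closedBall isClosed_closedBall sphere_subset_closedBall)
open UniformSpace (ball ball_mem_nhds mem_ball_comp mem_ball_self mem_ball_symmetry)

lemma exists_continuousOn_union_of_eqOn_inter {X Z : Type*} [TopologicalSpace X]
    [TopologicalSpace Z] {A B : Set Z} (hA : IsClosed A) (hB : IsClosed B) {a b : Z → X}
    (ha : ContinuousOn a A) (hb : ContinuousOn b B) (hab : EqOn a b (A ∩ B)) :
    ∃ γ : Z → X, ContinuousOn γ (A ∪ B) ∧ EqOn γ a A ∧ EqOn γ b B := by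
  classical
  have eqA : EqOn (A.piecewise a b) a A := piecewise_eqOn _ _ _
  have eqB : EqOn (A.piecewise a b) b B := fun p hp ↦ by
    by_cases hpA : p ∈ A
    · rw [eqA hpA, hab ⟨hpA, hp⟩]
    · exact piecewise_eq_of_notMem _ _ _ hpA
  exact ⟨_, (ha.congr eqA).union_of_isClosed (hb.congr eqB) hA hB, eqA, eqB⟩

/-- Controlled extension from `A` to `Q`: for a tolerance `V` on `Q` there is a tolerance `U` on `A`
such that every continuous `φ : A → X` that lifts `g` through `f` up to `U` extends to a continuous
map `Q → X` that lifts `g` up to `V`. Maps on subsets of `E` are total maps that are continuous on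
the subset. -/
def HasControlledExtension {X Y E : Type*} [TopologicalSpace X] [UniformSpace Y]
    [TopologicalSpace E] (f : X → Y) (g : E → Y) (A Q : Set E) (V : SetRel Y Y) : Prop :=
  ∃ U ∈ 𝓤 Y, ∀ φ : E → X, ContinuousOn φ A → (∀ p ∈ A, (g p, f (φ p)) ∈ U) →
    ∃ γ : E → X, ContinuousOn γ Q ∧ EqOn γ φ A ∧ ∀ p ∈ Q, (g p, f (γ p)) ∈ V

namespace HasControlledExtension

variable {X Y E : Type*} [TopologicalSpace X] [UniformSpace Y] [TopologicalSpace E]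
  {f : X → Y} {g : E → Y} {A B Q A₁ A₂ Q₁ Q₂ : Set E} {V : SetRel Y Y}

lemma refl (A : Set E) (hV : V ∈ 𝓤 Y) : HasControlledExtension f g A A V :=
  ⟨V, hV, fun φ hφ hφV ↦ ⟨φ, hφ, fun _ _ ↦ rfl, hφV⟩⟩

lemma trans (hAB : A ⊆ B) (h₁ : ∀ U ∈ 𝓤 Y, HasControlledExtension f g A B U)
    (h₂ : HasControlledExtension f g B Q V) : HasControlledExtension f g A Q V := by
  obtain ⟨U₂, hU₂, ext₂⟩ := h₂
  obtain ⟨U₁, hU₁, ext₁⟩ := h₁ U₂ hU₂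
  refine ⟨U₁, hU₁, fun φ hφ hφU ↦ ?_⟩
  obtain ⟨γ₁, hγ₁, hγ₁φ, hγ₁U⟩ := ext₁ φ hφ hφU
  obtain ⟨γ₂, hγ₂, hγ₂γ₁, hγ₂V⟩ := ext₂ γ₁ hγ₁ hγ₁U
  exact ⟨γ₂, hγ₂, (hγ₂γ₁.mono hAB).trans hγ₁φ, hγ₂V⟩

lemma union (h₁ : HasControlledExtension f g A₁ Q₁ V) (h₂ : HasControlledExtension f g A₂ Q₂ V)
    (hQ₁ : IsClosed Q₁) (hQ₂ : IsClosed Q₂) (hA₁ : A₁ ⊆ Q₁) (hA₂ : A₂ ⊆ Q₂)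
    (hinter : Q₁ ∩ Q₂ ⊆ A₁ ∩ A₂) : HasControlledExtension f g (A₁ ∪ A₂) (Q₁ ∪ Q₂) V := by
  obtain ⟨U₁, hU₁, ext₁⟩ := h₁
  obtain ⟨U₂, hU₂, ext₂⟩ := h₂
  refine ⟨U₁ ∩ U₂, inter_mem hU₁ hU₂, fun φ hφ hφU ↦ ?_⟩
  obtain ⟨γ₁, hγ₁, hγ₁φ, hγ₁V⟩ :=
    ext₁ φ (hφ.mono subset_union_left) fun p hp ↦ (hφU p (.inl hp)).1
  obtain ⟨γ₂, hγ₂, hγ₂φ, hγ₂V⟩ :=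
    ext₂ φ (hφ.mono subset_union_right) fun p hp ↦ (hφU p (.inr hp)).2
  obtain ⟨γ, hγ, eq₁, eq₂⟩ := exists_continuousOn_union_of_eqOn_inter hQ₁ hQ₂ hγ₁ hγ₂
    fun p hp ↦ (hγ₁φ (hinter hp).1).trans (hγ₂φ (hinter hp).2).symm
  refine ⟨γ, hγ, ((eq₁.mono hA₁).trans hγ₁φ).union ((eq₂.mono hA₂).trans hγ₂φ), ?_⟩
  rintro p (hp | hp)
  · exact eq₁ hp ▸ hγ₁V p hp
  · exact eq₂ hp ▸ hγ₂V p hp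

lemma union_left (h : HasControlledExtension f g (A ∩ Q) Q V) (hV : V ∈ 𝓤 Y)
    (hA : IsClosed A) (hQ : IsClosed Q) : HasControlledExtension f g A (A ∪ Q) V := by
  have := (refl A hV).union h hA hQ subset_rfl inter_subset_right fun p hp ↦ ⟨hp.1, hp⟩
  rwa [union_eq_left.2 inter_subset_left] at this

lemma image {F : Type*} [TopologicalSpace F] {π : F → E} (hπ : IsEmbedding π) {A Q : Set F}
    (h : HasControlledExtension f (g ∘ π) A Q V) :
    HasControlledExtension f g (π '' A) (π '' Q) V := by
  obtain ⟨U, hU, ext⟩ := h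
  refine ⟨U, hU, fun φ hφ hφU ↦ ?_⟩
  obtain ⟨γ, hγ, hγφ, hγV⟩ := ext (φ ∘ π) (hπ.isInducing.continuousOn_image_iff.1 hφ)
    fun p hp ↦ hφU _ (mem_image_of_mem π hp)
  have hextend : ∀ p, Function.extend π γ φ (π p) = γ p := hπ.injective.extend_apply _ _
  refine ⟨Function.extend π γ φ, ?_, ?_, ?_⟩
  · exact hπ.isInducing.continuousOn_image_iff.2 (hγ.congr fun p _ ↦ hextend p)
  · rintro _ ⟨p, hp, rfl⟩
    exact (hextend p).trans (hγφ hp)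
  · rintro _ ⟨p, hp, rfl⟩
    rw [hextend]
    exact hγV p hp

end HasControlledExtension

section Contraction

variable {X Y : Type*} [TopologicalSpace X] {f : X → Y}

lemma IsCompressivePair.exists_contraction [TopologicalSpace Y] {V' V : Set Y}
    (h : IsCompressivePair f V' V) :
    ∃ (ξ : X × ℝ → X) (c : X), ContinuousOn ξ ((f ⁻¹' V') ×ˢ Icc 0 1) ∧
      MapsTo ξ ((f ⁻¹' V') ×ˢ Icc 0 1) (f ⁻¹' V) ∧ c ∈ f ⁻¹' V ∧
      ∀ x ∈ f ⁻¹' V', ξ (x, 0) = x ∧ ξ (x, 1) = c := by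
  obtain ⟨-, -, -, ξ, hξ, hξ₀, c, hξ₁⟩ := h
  let π : (f ⁻¹' V') × unitInterval → X × ℝ := Prod.map (↑) (↑)
  have hπ : IsEmbedding π := IsEmbedding.subtypeVal.prodMap IsEmbedding.subtypeVal
  have hrange : π '' univ = (f ⁻¹' V') ×ˢ Icc 0 1 := by
    simp only [π, image_univ, range_prodMap, Subtype.range_coe]
  let ξ' : X × ℝ → X := Function.extend π (fun p ↦ (ξ p : X)) fun _ ↦ c
  have hξ' : ∀ p, ξ' (π p) = ξ p := hπ.injective.extend_apply _ _
  refine ⟨ξ', c, ?_, ?_, c.2, fun x hx ↦ ⟨?_, ?_⟩⟩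
  · rw [← hrange, hπ.isInducing.continuousOn_image_iff, continuousOn_univ]
    exact (continuous_subtype_val.comp hξ).congr fun p ↦ (hξ' p).symm
  · rw [← hrange, mapsTo_image_iff]
    intro p _
    rw [Function.comp_apply, hξ']
    exact (ξ p).2
  · exact (hξ' (⟨x, hx⟩, 0)).trans (hξ₀ ⟨x, hx⟩)
  · exact (hξ' (⟨x, hx⟩, 1)).trans (congrArg Subtype.val (hξ₁ ⟨x, hx⟩))

lemma IsCompressivePair.exists_extension_closedBall [TopologicalSpace Y] {V' V : Set Y}
    (h : IsCompressivePair f V' V) {E : Type*} [NormedAddCommGroup E] [NormedSpace ℝ E] {φ : E → X}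
    (hφ : ContinuousOn φ (sphere 0 1)) (hφV' : MapsTo φ (sphere 0 1) (f ⁻¹' V')) :
    ∃ γ : E → X, ContinuousOn γ (closedBall 0 1) ∧ EqOn γ φ (sphere 0 1) ∧
      MapsTo γ (closedBall 0 1) (f ⁻¹' V) := by
  obtain ⟨ξ, c, hξ, hξV, hcV, hξ₀₁⟩ := h.exists_contraction
  -- The contraction is spread over the annulus `1 / 2 ≤ ‖x‖ ≤ 1`; the inner ball goes to its end
  -- point, which avoids the singularity of the radial projection at the origin.
  let inner : Set E := closedBall 0 (1 / 2)
  let annulus : Set E := closedBall 0 1 ∩ {x | 1 / 2 ≤ ‖x‖}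
  let radial : E → X := fun x ↦ ξ (φ (‖x‖⁻¹ • x), 2 * (1 - ‖x‖))
  have hannulus : ∀ x ∈ annulus, 1 / 2 ≤ ‖x‖ ∧ ‖x‖ ≤ 1 := fun x hx ↦
    ⟨hx.2, mem_closedBall_zero_iff.1 hx.1⟩
  have hnormalize : MapsTo (fun x : E ↦ ‖x‖⁻¹ • x) annulus (sphere 0 1) := fun x hx ↦ by
    have : ‖x‖ ≠ 0 := by linarith [hannulus x hx]
    simp [norm_smul, this]
  have hmaps : MapsTo (fun x : E ↦ (φ (‖x‖⁻¹ • x), 2 * (1 - ‖x‖))) annulus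
      ((f ⁻¹' V') ×ˢ Icc 0 1) := fun x hx ↦
    ⟨hφV' (hnormalize hx), by constructor <;> linarith [hannulus x hx]⟩
  have hradial : ContinuousOn radial annulus := by
    have hinv : ContinuousOn (fun x : E ↦ ‖x‖⁻¹ • x) annulus :=
      (continuous_norm.continuousOn.inv₀ fun x hx ↦ by linarith [hannulus x hx]).smul
        continuousOn_id
    exact hξ.comp ((hφ.comp hinv hnormalize).prodMk (by fun_prop)) hmaps
  have hcover : inner ∪ annulus = closedBall 0 1 := by
    ext x
    simp only [inner, annulus, mem_union, mem_inter_iff, mem_closedBall_zero_iff, mem_ofPred_eq]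
    grind
  have hglue : EqOn (fun _ ↦ c) radial (inner ∩ annulus) := fun x hx ↦ by
    have hnorm : ‖x‖ = 1 / 2 := (mem_closedBall_zero_iff.1 hx.1).antisymm hx.2.2
    have hend : radial x = ξ (φ (‖x‖⁻¹ • x), 1) := by norm_num [radial, hnorm]
    rw [hend, (hξ₀₁ _ (hφV' (hnormalize hx.2))).2]
  obtain ⟨γ, hγ, hγ_inner, hγ_annulus⟩ := exists_continuousOn_union_of_eqOn_inter
    isClosed_closedBall (isClosed_closedBall.inter (isClosed_le continuous_const continuous_norm))
    continuousOn_const hradial hglue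
  refine ⟨γ, hcover ▸ hγ, fun x hx ↦ ?_, ?_⟩
  · have hnorm : ‖x‖ = 1 := mem_sphere_zero_iff_norm.1 hx
    rw [hγ_annulus ⟨sphere_subset_closedBall hx, by norm_num [hnorm]⟩]
    simpa [radial, hnorm] using (hξ₀₁ _ (hφV' hx)).1
  · rw [← hcover, mapsTo_union]
    exact ⟨fun x hx ↦ hγ_inner hx ▸ hcV, fun x hx ↦ hγ_annulus hx ▸ hξV (hmaps hx)⟩

lemma IsCompressivePair.exists_extension_of_convex [TopologicalSpace Y] {V' V : Set Y}
    (h : IsCompressivePair f V' V) {E : Type*} [NormedAddCommGroup E] [NormedSpace ℝ E]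
    {C : Set E} (hC : IsCompact C) (hconv : Convex ℝ C) {φ : E → X}
    (hφ : ContinuousOn φ (frontier C)) (hφV' : MapsTo φ (frontier C) (f ⁻¹' V')) :
    ∃ γ : E → X, ContinuousOn γ C ∧ EqOn γ φ (frontier C) ∧ MapsTo γ C (f ⁻¹' V) := by
  rcases (interior C).eq_empty_or_nonempty with hempty | hne
  · rw [hC.isClosed.frontier_eq, hempty, sdiff_empty] at hφ hφV' ⊢
    exact ⟨φ, hφ, fun _ _ ↦ rfl, hφV'.mono_right (preimage_mono h.2.2.1)⟩
  obtain ⟨e, -, heC, hefr⟩ :=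
    exists_homeomorph_image_interior_closure_frontier_eq_unitBall hconv hne hC.isBounded
  rw [hC.isClosed.closure_eq] at heC
  obtain ⟨γ, hγ, hγφ, hγV⟩ := h.exists_extension_closedBall (φ := φ ∘ e.symm)
    (hefr ▸ e.isInducing.continuousOn_image_iff.2 (by simpa [Function.comp_def] using hφ))
    (hefr ▸ mapsTo_image_iff.2 (by simpa [Function.comp_def] using hφV'))
  rw [← heC] at hγ hγV
  rw [← hefr] at hγφ
  exact ⟨γ ∘ e, e.isInducing.continuousOn_image_iff.1 hγ,
    fun x hx ↦ by simpa using hγφ (mem_image_of_mem e hx), mapsTo_image_iff.1 hγV⟩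

lemma IsCompressive.exists_entourage [UniformSpace Y] (hf : IsCompressive f) {K : Set Y}
    (hK : IsCompact K) {V : SetRel Y Y} (hV : V ∈ 𝓤 Y) :
    ∃ U ∈ 𝓤 Y, ∀ y ∈ K, ∃ V₁ V₂ : Set Y,
      IsCompressivePair f V₁ V₂ ∧ ball y U ⊆ V₁ ∧ V₂ ⊆ ball y V := by
  obtain ⟨W, hW, hWsymm, hWV⟩ := comp_symm_mem_uniformity_sets hV
  choose V₁ hmem hpair using fun z ↦
    hf z (interior (ball z W)) isOpen_interior (mem_interior_iff_mem_nhds.2 (ball_mem_nhds z hW))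
  obtain ⟨U, hU, hUV₁⟩ := lebesgue_number_lemma hK (fun z ↦ (hpair z).1)
    fun y _ ↦ mem_iUnion.2 ⟨y, hmem y⟩
  refine ⟨U, hU, fun y hy ↦ ?_⟩
  obtain ⟨z, hz⟩ := hUV₁ y hy
  have hzy : y ∈ ball z W := interior_subset ((hpair z).2.2.1 (hz (mem_ball_self y hU)))
  exact ⟨V₁ z, _, hpair z, hz, fun w hw ↦
    hWV (mem_ball_comp (mem_ball_symmetry.1 hzy) (interior_subset hw))⟩

lemma IsCompressive.exists_hasControlledExtension_of_small [UniformSpace Y] (hf : IsCompressive f)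
    {E : Type*} [NormedAddCommGroup E] [NormedSpace ℝ E] (g : E → Y) {K : Set Y} (hK : IsCompact K)
    {V : SetRel Y Y} (hV : V ∈ 𝓤 Y) :
    ∃ W ∈ 𝓤 Y, ∀ C : Set E, IsCompact C → Convex ℝ C → MapsTo g C K →
      (∀ x ∈ C, ∀ y ∈ C, (g x, g y) ∈ W) → HasControlledExtension f g (frontier C) C V := by
  obtain ⟨V₂, hV₂, hV₂V⟩ := comp_mem_uniformity_sets hV
  obtain ⟨U, hU, hpair⟩ := hf.exists_entourage hK hV₂
  obtain ⟨U₂, hU₂, hU₂U⟩ := comp_mem_uniformity_sets hU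
  refine ⟨U₂ ∩ V₂, inter_mem hU₂ hV₂, fun C hC hconv hgK hsmall ↦ ?_⟩
  rcases C.eq_empty_or_nonempty with rfl | ⟨z, hz⟩
  · simpa only [frontier_empty] using HasControlledExtension.refl ∅ hV
  obtain ⟨V₁, W, hVW, hUV₁, hWV₂⟩ := hpair (g z) (hgK hz)
  refine ⟨U₂, hU₂, fun φ hφ hφU ↦ ?_⟩
  have hφV₁ : MapsTo φ (frontier C) (f ⁻¹' V₁) := fun p hp ↦
    hUV₁ (hU₂U (mem_ball_comp (hsmall z hz p (hC.isClosed.frontier_subset hp)).1 (hφU p hp)))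
  obtain ⟨γ, hγ, hγφ, hγW⟩ := hVW.exists_extension_of_convex hC hconv hφ hφV₁
  exact ⟨γ, hγ, hγφ, fun p hp ↦ hV₂V (mem_ball_comp (hsmall p hp z hz).2 (hWV₂ (hγW hp)))⟩

end Contraction

lemma frontier_inter_preimage_of_isOpenMap {E F : Type*} [TopologicalSpace E] [TopologicalSpace F]
    {C : Set E} {s : Set F} (hC : IsClosed C) (hs : IsClosed s) {ℓ : E → F} (hℓ : Continuous ℓ)
    (hopen : IsOpenMap ℓ) :
    frontier (C ∩ ℓ ⁻¹' s) = (C ∩ ℓ ⁻¹' s) \ (interior C ∩ ℓ ⁻¹' interior s) := by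
  rw [(hC.inter (hs.preimage hℓ)).frontier_eq, interior_inter,
    hopen.preimage_interior_eq_interior_preimage hℓ]

lemma frontier_inter_preimage_Iic_union_Ici {E : Type*} [TopologicalSpace E] {C : Set E}
    (hC : IsClosed C) {ℓ : E → ℝ} (hℓ : Continuous ℓ) (hopen : IsOpenMap ℓ) (c : ℝ) :
    frontier (C ∩ ℓ ⁻¹' Iic c) ∪ frontier (C ∩ ℓ ⁻¹' Ici c) = frontier C ∪ C ∩ ℓ ⁻¹' {c} := by
  rw [frontier_inter_preimage_of_isOpenMap hC isClosed_Iic hℓ hopen,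
    frontier_inter_preimage_of_isOpenMap hC isClosed_Ici hℓ hopen, hC.frontier_eq, interior_Iic,
    interior_Ici]
  ext x
  simp only [mem_union, Set.mem_sdiff, mem_inter_iff, mem_preimage, mem_Iic, mem_Ici, mem_Iio,
    mem_Ioi, mem_singleton_iff]
  grind

lemma HasControlledExtension.of_cut {X Y E : Type*} [TopologicalSpace X] [UniformSpace Y]
    [TopologicalSpace E] {f : X → Y} {g : E → Y} {C : Set E} {V : SetRel Y Y} (hC : IsClosed C)
    {ℓ : E → ℝ} (hℓ : Continuous ℓ) (hopen : IsOpenMap ℓ) {c : ℝ}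
    (hle : HasControlledExtension f g (frontier (C ∩ ℓ ⁻¹' Iic c)) (C ∩ ℓ ⁻¹' Iic c) V)
    (hge : HasControlledExtension f g (frontier (C ∩ ℓ ⁻¹' Ici c)) (C ∩ ℓ ⁻¹' Ici c) V)
    (hsection : ∀ U ∈ 𝓤 Y,
      HasControlledExtension f g (frontier C ∩ ℓ ⁻¹' {c}) (C ∩ ℓ ⁻¹' {c}) U) :
    HasControlledExtension f g (frontier C) C V := by
  have hsection_closed : IsClosed (C ∩ ℓ ⁻¹' {c}) := hC.inter (isClosed_singleton.preimage hℓ)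
  have hle_closed : IsClosed (C ∩ ℓ ⁻¹' Iic c) := hC.inter (isClosed_Iic.preimage hℓ)
  have hge_closed : IsClosed (C ∩ ℓ ⁻¹' Ici c) := hC.inter (isClosed_Ici.preimage hℓ)
  have hinter : C ∩ ℓ ⁻¹' Iic c ∩ (C ∩ ℓ ⁻¹' Ici c) ⊆
      frontier (C ∩ ℓ ⁻¹' Iic c) ∩ frontier (C ∩ ℓ ⁻¹' Ici c) := by
    rw [frontier_inter_preimage_of_isOpenMap hC isClosed_Iic hℓ hopen,
      frontier_inter_preimage_of_isOpenMap hC isClosed_Ici hℓ hopen, interior_Iic, interior_Ici]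
    rintro x ⟨⟨hxC, hle : ℓ x ≤ c⟩, -, hge : c ≤ ℓ x⟩
    exact ⟨⟨⟨hxC, hle⟩, fun h ↦ hge.not_gt h.2⟩, ⟨hxC, hge⟩, fun h ↦ hle.not_gt h.2⟩
  have hhalves := hle.union hge hle_closed hge_closed hle_closed.frontier_subset
    hge_closed.frontier_subset hinter
  rw [frontier_inter_preimage_Iic_union_Ici hC hℓ hopen, ← inter_union_distrib_left,
    ← preimage_union, Iic_union_Ici, preimage_univ, inter_univ] at hhalves
  refine .trans subset_union_left (fun U hU ↦ .union_left ?_ hU isClosed_frontier hsection_closed)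
    hhalves
  rw [← inter_assoc, inter_eq_left.2 hC.frontier_subset]
  exact hsection U hU

lemma interior_preimage_affineMap_of_convex {E F : Type*} [AddCommGroup E] [Module ℝ E]
    [TopologicalSpace E] [IsTopologicalAddGroup E] [ContinuousConstSMul ℝ E] [AddCommGroup F]
    [Module ℝ F] [TopologicalSpace F] [IsTopologicalAddGroup F] [ContinuousSMul ℝ F] {C : Set E}
    (hconv : Convex ℝ C) {π : F →ᵃ[ℝ] E} (hπ : Continuous π)
    (hne : (π ⁻¹' interior C).Nonempty) : interior (π ⁻¹' C) = π ⁻¹' interior C := by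
  refine subset_antisymm (fun x hx ↦ ?_) (preimage_interior_subset_interior_preimage hπ)
  obtain ⟨p, hp⟩ := hne
  have hnear : ∀ᶠ t in 𝓝 (1 : ℝ), AffineMap.lineMap p x t ∈ π ⁻¹' C :=
    (AffineMap.lineMap_continuous.tendsto' 1 x (AffineMap.lineMap_apply_one p x)).eventually
      (mem_interior_iff_mem_nhds.1 hx)
  obtain ⟨t, hmem, ht⟩ :=
    ((hnear.filter_mono nhdsWithin_le_nhds).and (self_mem_nhdsWithin (s := Ioi 1))).exists
  have ht : 1 < t := ht
  refine hconv.openSegment_interior_self_subset_interior hp hmem ?_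
  rw [openSegment_eq_image_lineMap]
  refine ⟨t⁻¹, ⟨by positivity, inv_lt_one_of_one_lt₀ ht⟩, ?_⟩
  rw [← AffineMap.apply_lineMap, AffineMap.lineMap_lineMap_right,
    inv_mul_cancel₀ (by positivity), AffineMap.lineMap_apply_one]

lemma HasControlledExtension.of_ker {X Y E : Type*} [TopologicalSpace X] [UniformSpace Y]
    [NormedAddCommGroup E] [NormedSpace ℝ E] {f : X → Y} {g : E → Y} {C : Set E} {V : SetRel Y Y}
    (hV : V ∈ 𝓤 Y) (hC : IsCompact C) (hconv : Convex ℝ C) (hg : ContinuousOn g C)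
    {ℓ : E →L[ℝ] ℝ} {c : ℝ}
    (hker : ∀ (D : Set ℓ.ker) (h : ℓ.ker → Y), IsCompact D → Convex ℝ D → ContinuousOn h D →
      HasControlledExtension f h (frontier D) D V) :
    HasControlledExtension f g (frontier C ∩ ℓ ⁻¹' {c}) (C ∩ ℓ ⁻¹' {c}) V := by
  rcases (interior C ∩ ℓ ⁻¹' {c}).eq_empty_or_nonempty with hempty | ⟨p, hp, rfl⟩
  · have : frontier C ∩ ℓ ⁻¹' {c} = C ∩ ℓ ⁻¹' {c} := by
      rw [hC.isClosed.frontier_eq, sdiff_inter_right_comm, sdiff_eq_left]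
      exact disjoint_left.2 fun x hx hxC ↦ hempty.subset ⟨hxC, hx.2⟩
    rw [this]
    exact refl _ hV
  let π : ℓ.ker →ᵃ[ℝ] E := (AffineEquiv.vaddConst ℝ p).toAffineMap.comp
    ℓ.ker.subtype.toAffineMap
  have hπ : IsClosedEmbedding π :=
    (Homeomorph.addRight p).isClosedEmbedding.comp ℓ.isClosed_ker.isClosedEmbedding_subtypeVal
  have hrange : range π = ℓ ⁻¹' {ℓ p} := by
    ext x
    refine ⟨?_, fun hx ↦ ⟨⟨x - p, by simpa [sub_eq_zero] using hx⟩, by simp [π]⟩⟩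
    rintro ⟨v, rfl⟩
    simp [π]
  have hfrontier : frontier (π ⁻¹' C) = π ⁻¹' frontier C := by
    rw [hC.isClosed.frontier_eq, (hC.isClosed.preimage hπ.continuous).frontier_eq,
      interior_preimage_affineMap_of_convex hconv hπ.continuous ⟨0, by simpa [π] using hp⟩,
      preimage_sdiff]
  have hD := hker (π ⁻¹' C) (g ∘ π) (hπ.isCompact_preimage hC) (hconv.affine_preimage π)
    (hg.comp hπ.continuous.continuousOn (mapsTo_preimage π C))
  rw [hfrontier] at hD
  simpa only [image_preimage_eq_inter_range, hrange] using hD.image hπ.isEmbedding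

lemma exists_finset_separating {E : Type*} [AddCommGroup E] [Module ℝ E] [TopologicalSpace E]
    [IsTopologicalAddGroup E] [ContinuousSMul ℝ E] [LocallyConvexSpace ℝ E] [T1Space E]
    {B : Set (E × E)} (hB : IsCompact B) (hdiag : ∀ p ∈ B, p.1 ≠ p.2) :
    ∃ S : Finset ((E →L[ℝ] ℝ) × ℝ), ∀ p ∈ B, ∃ h ∈ S, h.1 p.1 < h.2 ∧ h.2 < h.1 p.2 := by
  obtain ⟨S, hS⟩ := hB.elim_finite_subcover
    (fun h : (E →L[ℝ] ℝ) × ℝ ↦ {p : E × E | h.1 p.1 < h.2} ∩ {p | h.2 < h.1 p.2})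
    (fun h ↦ (isOpen_lt (by fun_prop) continuous_const).inter
      (isOpen_lt continuous_const (by fun_prop))) fun p hp ↦ by
    obtain ⟨ℓ, hℓ⟩ := geometric_hahn_banach_point_point (hdiag p hp)
    obtain ⟨c, hc⟩ := exists_between hℓ
    exact mem_iUnion.2 ⟨(ℓ, c), hc⟩
  exact ⟨S, fun p hp ↦ by
    obtain ⟨h, hh, hsep⟩ := mem_iUnion₂.1 (hS hp)
    exact ⟨h, hh, hsep⟩⟩

lemma convex_induction_on_cuts {E : Type*} [AddCommGroup E] [Module ℝ E] [TopologicalSpace E]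
    [IsTopologicalAddGroup E] [ContinuousSMul ℝ E] [LocallyConvexSpace ℝ E] [T1Space E]
    {B : Set (E × E)} (hB : IsCompact B) (hdiag : ∀ p ∈ B, p.1 ≠ p.2) {P : Set E → Prop} {C : Set E}
    (hC : IsCompact C) (hconv : Convex ℝ C)
    (small : ∀ D ⊆ C, IsCompact D → Convex ℝ D → (∀ x ∈ D, ∀ y ∈ D, (x, y) ∉ B) → P D)
    (cut : ∀ D ⊆ C, IsCompact D → Convex ℝ D → ∀ (ℓ : E →L[ℝ] ℝ) (c : ℝ), ℓ ≠ 0 →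
      P (D ∩ ℓ ⁻¹' Iic c) → P (D ∩ ℓ ⁻¹' Ici c) → P D) : P C := by
  classical
  obtain ⟨S, hS⟩ := exists_finset_separating hB hdiag
  suffices ∀ (S : Finset ((E →L[ℝ] ℝ) × ℝ)) (D : Set E), D ⊆ C → IsCompact D → Convex ℝ D →
      (∀ x ∈ D, ∀ y ∈ D, (x, y) ∈ B → ∃ h ∈ S, h.1 x < h.2 ∧ h.2 < h.1 y) → P D from
    this S C subset_rfl hC hconv fun x _ y _ ↦ hS (x, y)
  intro S
  induction S using Finset.induction_on with
  | empty =>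
    exact fun D hDC hD hDconv hsep ↦ small D hDC hD hDconv fun x hx y hy hxy ↦ by
      simpa using hsep x hx y hy hxy
  | insert h S _ ih =>
    intro D hDC hD hDconv hsep
    obtain ⟨ℓ, c⟩ := h
    rcases eq_or_ne ℓ 0 with rfl | hℓ
    · refine ih D hDC hD hDconv fun x hx y hy hxy ↦ ?_
      obtain ⟨h, hh, hlt⟩ := hsep x hx y hy hxy
      grind
    refine cut D hDC hD hDconv ℓ c hℓ ?_ ?_
    · refine ih _ (inter_subset_left.trans hDC)
        (hD.inter_right (isClosed_Iic.preimage ℓ.continuous))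
        (hDconv.inter ((convex_Iic c).linear_preimage ℓ.toLinearMap)) ?_
      rintro x ⟨hx, -⟩ y ⟨hy, hyc : ℓ y ≤ c⟩ hxy
      obtain ⟨h, hh, hlt⟩ := hsep x hx y hy hxy
      grind
    · refine ih _ (inter_subset_left.trans hDC)
        (hD.inter_right (isClosed_Ici.preimage ℓ.continuous))
        (hDconv.inter ((convex_Ici c).linear_preimage ℓ.toLinearMap)) ?_
      rintro x ⟨hx, hxc : c ≤ ℓ x⟩ y ⟨hy, -⟩ hxy
      obtain ⟨h, hh, hlt⟩ := hsep x hx y hy hxy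
      grind

theorem IsCompressive.hasControlledExtension_frontier {X Y E : Type*} [TopologicalSpace X]
    [UniformSpace Y] [NormedAddCommGroup E] [NormedSpace ℝ E] [FiniteDimensional ℝ E] {f : X → Y}
    (hf : IsCompressive f) {C : Set E} {g : E → Y} (hC : IsCompact C) (hconv : Convex ℝ C)
    (hg : ContinuousOn g C) {V : SetRel Y Y} (hV : V ∈ 𝓤 Y) :
    HasControlledExtension f g (frontier C) C V := by
  induction hn : Module.finrank ℝ E using Nat.strong_induction_on generalizing E V with
  | h n ih =>
  subst hn
  obtain ⟨W, hW, hsmall⟩ :=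
    hf.exists_hasControlledExtension_of_small g (hC.image_of_continuousOn hg) hV
  let B : Set (E × E) := (C ×ˢ C) ∩ Prod.map g g ⁻¹' (interior W)ᶜ
  have hB_closed : IsClosed B := (hg.prodMap hg).preimage_isClosed_of_isClosed
    (hC.prod hC).isClosed isOpen_interior.isClosed_compl
  have hB : IsCompact B := (hC.prod hC).of_isClosed_subset hB_closed inter_subset_left
  have hdiag : ∀ p ∈ B, p.1 ≠ p.2 := fun p hp h ↦ hp.2 <| by
    rw [Prod.map_apply', h]
    exact refl_mem_uniformity (interior_mem_uniformity hW)
  refine convex_induction_on_cuts hB hdiag hC hconv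
    (fun D hDC hD hDconv hDB ↦ hsmall D hD hDconv (fun x hx ↦ mem_image_of_mem g (hDC hx))
      fun x hx y hy ↦ ?_)
    fun D hDC hD hDconv ℓ c hℓ hle hge ↦ ?_
  · by_contra hxy
    exact hDB x hx y hy ⟨⟨hDC hx, hDC hy⟩, fun h ↦ hxy (interior_subset h)⟩
  · refine .of_cut hD.isClosed ℓ.continuous (ℓ.isOpenMap_of_ne_zero hℓ) hle hge fun U hU ↦ ?_
    exact .of_ker hU hD hDconv (hg.mono hDC) fun D' h hD' hD'conv hh ↦
      ih _ (Submodule.finrank_lt fun htop ↦ hℓ <|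
        ContinuousLinearMap.coe_injective (LinearMap.ker_eq_top.1 htop)) hD' hD'conv hh hU rfl

lemma frontier_convexHull_range_affineBasis {ι E : Type*} [Finite ι] [NormedAddCommGroup E]
    [NormedSpace ℝ E] (b : AffineBasis ι ℝ E) :
    frontier (convexHull ℝ (range b)) = ⋃ i, convexHull ℝ (b '' {i}ᶜ) := by
  classical
  have := Fintype.ofFinite ι
  rw [((finite_range b).isClosed_convexHull ℝ).frontier_eq, b.interior_convexHull]
  ext x
  rw [Set.mem_sdiff, mem_iUnion, mem_ofPred_eq, not_forall]
  refine ⟨fun ⟨hx, i, hi⟩ ↦ ⟨i, ?_⟩, fun ⟨i, hx⟩ ↦ ⟨?_, i, ?_⟩⟩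
  · rw [b.convexHull_eq_nonneg_coord] at hx
    have hi : b.coord i x = 0 := (not_lt.1 hi).antisymm (hx i)
    rw [← b.linear_combination_coord_eq_self x, ← Finset.sum_erase (a := i) _ (by simp [hi])]
    refine (convex_convexHull ℝ _).sum_mem (fun j _ ↦ hx j) ?_ fun j hj ↦
      subset_convexHull ℝ _ (mem_image_of_mem b (Finset.ne_of_mem_erase hj))
    exact (Finset.sum_erase (f := fun j ↦ b.coord j x) _ hi).trans (b.sum_coord_apply_eq_one x)
  · exact convexHull_mono (image_subset_range _ _) hx
  · have hface : convexHull ℝ (b '' {i}ᶜ) ⊆ b.coord i ⁻¹' {0} :=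
      convexHull_min (image_subset_iff.2 fun j hj ↦ b.coord_apply_ne (Ne.symm hj))
        ((convex_singleton 0).affine_preimage _)
    exact (hface hx).not_gt

lemma exists_isEmbedding_affineMap_of_affineIndependent {ι E F : Type*} [Finite ι]
    [NormedAddCommGroup F] [NormedSpace ℝ F] [AddCommGroup E] [Module ℝ E] [TopologicalSpace E]
    [IsTopologicalAddGroup E] [ContinuousSMul ℝ E] [T2Space E] {v : ι → E}
    (hv : AffineIndependent ℝ v) (b : AffineBasis ι ℝ F) :
    ∃ τ : F →ᵃ[ℝ] E, IsEmbedding τ ∧ ∀ i, τ (b i) = v i := by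
  classical
  have := Fintype.ofFinite ι
  have := b.finiteDimensional
  let τ : F →ᵃ[ℝ] E := (Fintype.linearCombination ℝ v).toAffineMap.comp b.coords
  have hτ : ∀ x, τ x = Finset.univ.affineCombination ℝ v (b.coords x) := fun x ↦
    (Finset.univ.affineCombination_eq_linear_combination v (b.coords x)
      (b.sum_coord_apply_eq_one x)).symm
  have hinj : Function.Injective τ := fun x y hxy ↦ by
    rw [hτ, hτ] at hxy
    have hcoords := (affineIndependent_iff_eq_of_fintype_affineCombination_eq ℝ v).1 hv _ _
      (b.sum_coord_apply_eq_one x) (b.sum_coord_apply_eq_one y) hxy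
    exact b.ext_elem (congrFun hcoords)
  refine ⟨τ, ?_, fun i ↦ ?_⟩
  · rw [τ.decomp]
    exact (Homeomorph.addRight (τ 0)).isEmbedding.comp
      (τ.linear.isClosedEmbedding_of_injective
        (LinearMap.ker_eq_bot.2 (τ.linear_injective_iff.2 hinj))).isEmbedding
  · simp [τ, Fintype.linearCombination_apply, AffineBasis.coord_apply]

lemma IsCompressive.hasControlledExtension_simplex {ι X Y E : Type*} [Finite ι] [Nonempty ι]
    [TopologicalSpace X] [UniformSpace Y] [AddCommGroup E] [Module ℝ E] [TopologicalSpace E]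
    [IsTopologicalAddGroup E] [ContinuousSMul ℝ E] [T2Space E] {f : X → Y} (hf : IsCompressive f)
    {v : ι → E} (hv : AffineIndependent ℝ v) {g : E → Y}
    (hg : ContinuousOn g (convexHull ℝ (range v))) {V : SetRel Y Y} (hV : V ∈ 𝓤 Y) :
    HasControlledExtension f g (⋃ i, convexHull ℝ (v '' {i}ᶜ)) (convexHull ℝ (range v)) V := by
  have := Fintype.ofFinite ι
  obtain ⟨b⟩ := AffineBasis.exists_affineBasis_of_finiteDimensional (ι := ι) (k := ℝ)
    (P := Fin (Fintype.card ι - 1) → ℝ)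
    (by rw [Module.finrank_fin_fun, Nat.sub_add_cancel Fintype.card_pos])
  obtain ⟨τ, hτ, hτb⟩ := exists_isEmbedding_affineMap_of_affineIndependent hv b
  have himage : ∀ s : Set ι, τ '' convexHull ℝ (b '' s) = convexHull ℝ (v '' s) := fun s ↦ by
    rw [τ.image_convexHull, image_image]
    simp only [hτb]
  have hsimplex : τ '' convexHull ℝ (range b) = convexHull ℝ (range v) := by
    simpa only [image_univ] using himage univ
  have hfrontier := (hf.hasControlledExtension_frontier (g := g ∘ τ)
    ((finite_range b).isCompact_convexHull ℝ) (convex_convexHull ℝ _)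
    (hτ.isInducing.continuousOn_image_iff.1 (hsimplex ▸ hg)) hV).image hτ
  rwa [frontier_convexHull_range_affineBasis, image_iUnion, hsimplex, funext fun i ↦ himage {i}ᶜ]
    at hfrontier

section Complex

lemma mem_of_ssubset_minimal_missing_face {E : Type*} [AddCommGroup E] [Module ℝ E]
    {K : Geometry.SimplicialComplex ℝ E} {F : Set (Finset E)} {s t : Finset E}
    (hs : Minimal (· ∈ K.faces \ F) s) (hts : t ⊂ s) (ht : t.Nonempty) : t ∈ F := by
  by_contra htF
  exact hs.not_prop_of_lt hts ⟨K.down_closed hs.prop.1 hts.subset ht, htF⟩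

lemma isRelLowerSet_insert_minimal_missing_face {E : Type*} [AddCommGroup E] [Module ℝ E]
    {K : Geometry.SimplicialComplex ℝ E} {F : Set (Finset E)} {s : Finset E}
    (hF : IsRelLowerSet F Finset.Nonempty) (hs : Minimal (· ∈ K.faces \ F) s) :
    IsRelLowerSet (insert s F) Finset.Nonempty := by
  rintro t (rfl | ht)
  · refine ⟨K.nonempty_of_mem_faces hs.prop.1, fun u hu hu_ne ↦ ?_⟩
    exact hu.eq_or_lt.imp id fun hlt ↦ mem_of_ssubset_minimal_missing_face hs hlt hu_ne
  · exact ⟨hF.prop_of_mem ht, fun u hu hu_ne ↦ .inr (hF.mem_of_le ht hu hu_ne)⟩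

lemma biUnion_convexHull_inter_minimal_missing_face {E : Type*} [AddCommGroup E] [Module ℝ E]
    {K : Geometry.SimplicialComplex ℝ E} {F : Set (Finset E)} {s : Finset E}
    (hFK : F ⊆ K.faces) (hF : IsRelLowerSet F Finset.Nonempty)
    (hs : Minimal (· ∈ K.faces \ F) s) :
    (⋃ t ∈ F, convexHull ℝ (t : Set E)) ∩ convexHull ℝ (s : Set E) =
      ⋃ i : s, convexHull ℝ (((↑) : s → E) '' {i}ᶜ) := by
  classical
  have hsK := hs.prop.1
  have hface : ∀ i : s, ((↑) : s → E) '' {i}ᶜ = s.erase i := fun i ↦ by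
    rw [image_compl_eq_range_sdiff_image Subtype.val_injective, image_singleton,
      Finset.coe_erase, Subtype.range_coe]
  simp only [hface]
  ext p
  simp only [mem_inter_iff, mem_iUnion, exists_prop]
  constructor
  · rintro ⟨⟨t, ht, hpt⟩, hps⟩
    have hst : ¬ s ⊆ t := fun h ↦ hs.prop.2 (hF.mem_of_le ht h (K.nonempty_of_mem_faces hsK))
    obtain ⟨i, his, hit⟩ := Finset.not_subset.1 hst
    have hsub : (s : Set E) ∩ t ⊆ s.erase i := fun x hx ↦
      Finset.mem_erase.2 ⟨ne_of_mem_of_not_mem hx.2 hit, hx.1⟩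
    exact ⟨⟨i, his⟩, convexHull_mono hsub (K.inter_subset_convexHull hsK (hFK ht) ⟨hps, hpt⟩)⟩
  · rintro ⟨i, hp⟩
    have hne : (s.erase i).Nonempty :=
      Finset.coe_nonempty.1 (convexHull_nonempty_iff (𝕜 := ℝ).1 ⟨p, hp⟩)
    exact ⟨⟨_, mem_of_ssubset_minimal_missing_face hs (Finset.erase_ssubset i.2) hne, hp⟩,
      convexHull_mono (Finset.coe_subset.2 (Finset.erase_subset _ _)) hp⟩

variable {X Y E : Type*} [TopologicalSpace X] [UniformSpace Y] [AddCommGroup E] [Module ℝ E]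
  [TopologicalSpace E] [IsTopologicalAddGroup E] [ContinuousSMul ℝ E] [T2Space E] {f : X → Y}
  {g : E → Y} {J K : Geometry.SimplicialComplex ℝ E} {V : SetRel Y Y}

lemma IsCompressive.hasControlledExtension_insert_face (hf : IsCompressive f)
    (hg : ContinuousOn g K.space) {F : Set (Finset E)} (hFK : F ⊆ K.faces) (hFfin : F.Finite)
    (hF : IsRelLowerSet F Finset.Nonempty) {s : Finset E} (hs : Minimal (· ∈ K.faces \ F) s)
    (hV : V ∈ 𝓤 Y) :
    HasControlledExtension f g (⋃ t ∈ F, convexHull ℝ (t : Set E))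
      (⋃ t ∈ insert s F, convexHull ℝ (t : Set E)) V := by
  have hsK : s ∈ K.faces := hs.prop.1
  have : Nonempty s := (K.nonempty_of_mem_faces hsK).to_subtype
  have hrange : range ((↑) : s → E) = s := Subtype.range_coe
  have hsimplex := hf.hasControlledExtension_simplex (K.indep hsK) (g := g)
    (hrange ▸ hg.mono (K.convexHull_subset_space hsK)) hV
  rw [hrange, ← biUnion_convexHull_inter_minimal_missing_face hFK hF hs] at hsimplex
  rw [biUnion_insert, union_comm]
  exact hsimplex.union_left hV
    (hFfin.isClosed_biUnion fun t _ ↦ t.finite_toSet.isClosed_convexHull ℝ)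
    (s.finite_toSet.isClosed_convexHull ℝ)

theorem IsCompressive.hasControlledExtension_space (hf : IsCompressive f)
    (hKfin : K.faces.Finite) (hJK : J.faces ⊆ K.faces) (hg : ContinuousOn g K.space)
    (hV : V ∈ 𝓤 Y) : HasControlledExtension f g J.space K.space V := by
  suffices J.faces ⊆ K.faces ∧ IsRelLowerSet K.faces Finset.Nonempty ∧
      ∀ V ∈ 𝓤 Y, HasControlledExtension f g J.space (⋃ t ∈ K.faces, convexHull ℝ (t : Set E)) V from
    this.2.2 V hV
  refine hKfin.induction_to (C := fun F ↦ J.faces ⊆ F ∧ IsRelLowerSet F Finset.Nonempty ∧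
    ∀ V ∈ 𝓤 Y, HasControlledExtension f g J.space (⋃ t ∈ F, convexHull ℝ (t : Set E)) V)
    J.faces hJK ⟨subset_rfl, J.isRelLowerSet_faces, fun V hV ↦ .refl _ hV⟩ ?_
  rintro F hFK ⟨hJF, hF, hext⟩
  obtain ⟨s, hs⟩ := (hKfin.sdiff (t := F)).exists_minimal (sdiff_nonempty.2 hFK.2)
  refine ⟨s, hs.prop, hJF.trans (subset_insert s F),
    isRelLowerSet_insert_minimal_missing_face hF hs, fun V hV ↦ ?_⟩
  exact .trans (biUnion_subset_biUnion_left hJF) hext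
    (hf.hasControlledExtension_insert_face hg hFK.1 (hKfin.subset hFK.1) hF hs hV)

end Complex

lemma exists_entourage_subset_of_mem_nhdsSet_diagonal {Y : Type*} [UniformSpace Y] {K : Set Y}
    (hK : IsCompact K) {W : Set (Y × Y)} (hW : W ∈ 𝓝ˢ (diagonal Y)) :
    ∃ V ∈ 𝓤 Y, ∀ y ∈ K, ∀ z, (y, z) ∈ V → (y, z) ∈ W := by
  choose O hO hyO hOW using TopologicalSpace.exists_open_prod_subset_of_mem_nhds_diagonal hW
  obtain ⟨V, hV, hball⟩ := lebesgue_number_lemma hK hO fun y _ ↦ mem_iUnion.2 ⟨y, hyO y⟩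
  refine ⟨V, hV, fun y hy z hz ↦ ?_⟩
  obtain ⟨x, hx⟩ := hball y hy
  exact hOW x ⟨hx (mem_ball_self y hV), hx hz⟩

theorem stmt_10_general {X Y : Type*} [TopologicalSpace X] [UniformSpace Y]
    {E : Type*} [AddCommGroup E] [Module ℝ E] [TopologicalSpace E] [IsTopologicalAddGroup E]
    [ContinuousSMul ℝ E] [T2Space E] (f : X → Y) (hcomp : IsCompressive f)
    (K J : Geometry.SimplicialComplex ℝ E) (hKfin : K.faces.Finite) (hJK : J.faces ⊆ K.faces)
    (g : E → Y) (hg : ContinuousOn g K.space) (η : E → X) (hη : ContinuousOn η J.space)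
    (hfη : ∀ p ∈ J.space, f (η p) = g p) (W : Set (Y × Y)) (hW : W ∈ nhdsSet (diagonal Y)) :
    ∃ γ : E → X, ContinuousOn γ K.space ∧ (∀ p ∈ J.space, γ p = η p) ∧
      ∀ p ∈ K.space, (g p, f (γ p)) ∈ W := by
  have hKcompact : IsCompact K.space :=
    hKfin.isCompact_biUnion fun s _ ↦ s.finite_toSet.isCompact_convexHull ℝ
  obtain ⟨V, hV, hVW⟩ :=
    exists_entourage_subset_of_mem_nhdsSet_diagonal (hKcompact.image_of_continuousOn hg) hW
  obtain ⟨U, hU, extend⟩ := hcomp.hasControlledExtension_space hKfin hJK hg hV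
  obtain ⟨γ, hγ, hγη, hγV⟩ := extend η hη fun p hp ↦ hfη p hp ▸ refl_mem_uniformity hU
  exact ⟨γ, hγ, hγη, fun p hp ↦ hVW _ (mem_image_of_mem g hp) _ (hγV p hp)⟩

/-- **Proposition 2.3 (lifting).** Let `f : X → Y` be a compressive continuous
surjection onto a metric space, `K` a finite geometric simplicial complex in a
finite-dimensional real vector space `E`, `J` a subcomplex of `K`, `g : |K| → Y`
continuous, `η : |J| → X` continuous with `f ∘ η = g` on `|J|`, and `W` a
neighborhood of the diagonal of `Y × Y`.  Then `η` extends to a continuous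
`γ : |K| → X` with `(g p, f (γ p)) ∈ W` for all `p ∈ |K|`. -/
theorem stmt_10 {X Y : Type*} [TopologicalSpace X] [MetricSpace Y]
    {E : Type*} [NormedAddCommGroup E] [NormedSpace ℝ E] [FiniteDimensional ℝ E]
    (f : X → Y) (hfc : Continuous f) (hfs : Function.Surjective f)
    (hcomp : IsCompressive f)
    (K J : Geometry.SimplicialComplex ℝ E)
    (hKfin : K.faces.Finite) (hJK : J.faces ⊆ K.faces)
    (g : E → Y) (hg : ContinuousOn g K.space)
    (η : E → X) (hη : ContinuousOn η J.space)
    (hfη : ∀ p ∈ J.space, f (η p) = g p)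
    (W : Set (Y × Y)) (hW : W ∈ nhdsSet (Set.diagonal Y)) :
    ∃ γ : E → X, ContinuousOn γ K.space ∧ (∀ p ∈ J.space, γ p = η p) ∧
      ∀ p ∈ K.space, (g p, f (γ p)) ∈ W := by
  exact stmt_10_general f hcomp K J hKfin hJK g hg η hη hfη W hW
end

section
/- Let X and Y be compact connected metric absolute neighborhood retracts, with X simply connected, and let f : X → Y be a continuous surjection such that for each y ∈ Y the fiber f⁻¹(y) is contractible. Then f is a homotopy equivalence. -/
universe u

/-!
If an open subset `V` of an ANR `X` is contractible in an open set `U`, then every map into `V` from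
a closed subset of `T` extends to a map from `T` into `U`. For a cell-like map `f : X → Y` this
applies to preimages of small concentric balls of `Y`, uniformly by compactness. On a
finite-dimensional compact space `T` finitely many such extensions, one for each color of a fine
colored cover, turn any map `T → Y` into an approximate lift `T → X`, also relative to a closed set
where a lift is already given. Since nearby maps into an ANR are homotopic, composition with `f` is
a bijection from the homotopy classes of maps `T → X` to those of maps `T → Y`. Both `X` and `Y` are
retracts up to homotopy of compact subsets of finite-dimensional cubes, so this bijectivity produces
a homotopy inverse as in the Whitehead theorem.
-/

open Set Topology unitInterval

section CubeRetract

/-- `X` is a retract of an open subset of the Hilbert cube. For compact metric spaces this is the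
form in which the ANR property is used. -/
def IsOpenCubeRetract (X : Type*) [TopologicalSpace X] : Prop :=
  ∃ (U : Set (ℕ → I)) (e : C(X, U)) (r : C(U, X)), IsOpen U ∧ r.comp e = .id X

theorem IsANR.isOpenCubeRetract {X : Type u} [MetricSpace X] [CompactSpace X] (hX : IsANR X) :
    IsOpenCubeRetract X := by
  obtain ⟨F, hF⟩ := Metric.PiNatEmbed.exists_embedding_to_hilbert_cube (X := X)
  have : TopologicalSpace.MetrizableSpace (ULift.{u} (ℕ → I)) :=
    Homeomorph.ulift.isEmbedding.metrizableSpace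
  let _ : MetricSpace (ULift.{u} (ℕ → I)) := TopologicalSpace.metrizableSpaceMetric _
  have he : IsClosedEmbedding (ULift.up.{u} ∘ F) :=
    Homeomorph.ulift.symm.isClosedEmbedding.comp (hF.continuous.isClosedEmbedding hF.injective)
  obtain ⟨U, r, hU, heU, hr, hr_mem, hr_fix⟩ := hX _ _ he.isEmbedding he.isClosed_range
  let r' : C(ULift.up ⁻¹' U, range (ULift.up.{u} ∘ F)) :=
    ⟨fun z => ⟨r (.up z), hr_mem _ z.2⟩,
      .subtype_mk (hr.comp_continuous (by fun_prop) fun z => z.2) _⟩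
  refine ⟨ULift.up ⁻¹' U, ⟨fun x => ⟨F x, heU ⟨x, rfl⟩⟩, hF.continuous.subtype_mk _⟩,
    .comp he.isEmbedding.toHomeomorph.symm r', hU.preimage continuous_uliftUp, ?_⟩
  ext1 x
  exact he.isEmbedding.toHomeomorph.symm_apply_eq.2 (Subtype.ext (hr_fix _ ⟨x, rfl⟩))

variable {X T : Type*} [TopologicalSpace X] [TopologicalSpace T]

theorem IsOpenCubeRetract.of_isOpen (hX : IsOpenCubeRetract X) {V : Set X} (hV : IsOpen V) :
    IsOpenCubeRetract V := by
  obtain ⟨U, e, r, hU, hre⟩ := hX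
  have hre' (x : X) : r (e x) = x := DFunLike.congr_fun hre x
  have hr_mem (z : Subtype.val '' (r ⁻¹' V)) : r ⟨z, image_val_subset z.2⟩ ∈ V := by
    obtain ⟨_, w, hw, rfl⟩ := z
    exact hw
  refine ⟨Subtype.val '' (r ⁻¹' V), ⟨fun v => ⟨e v, e v, by simp [hre'], rfl⟩, by fun_prop⟩,
    ⟨fun z => ⟨r ⟨z, image_val_subset z.2⟩, hr_mem z⟩, by fun_prop⟩,
    hU.isOpenMap_subtype_val _ (hV.preimage r.continuous), ?_⟩
  ext v
  exact hre' v

theorem IsOpenCubeRetract.exists_extension_nhds (hX : IsOpenCubeRetract X) [NormalSpace T]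
    {A : Set T} (hA : IsClosed A) (φ : C(A, X)) :
    ∃ W, IsOpen W ∧ ∃ (hAW : A ⊆ W) (Φ : C(W, X)), Φ.comp (.inclusion hAW) = φ := by
  obtain ⟨U, e, r, hU, hre⟩ := hX
  obtain ⟨G, hG⟩ := ContinuousMap.exists_restrict_eq hA
    ((ContinuousMap.mk ((↑) : U → ℕ → I)).comp (e.comp φ))
  have hGA (a : A) : G a = e (φ a) := DFunLike.congr_fun hG a
  refine ⟨G ⁻¹' U, hU.preimage G.continuous, fun a ha => ?_,
    r.comp (G.restrictPreimage U), ?_⟩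
  · rw [mem_preimage, hGA ⟨a, ha⟩]
    exact (e _).2
  · ext1 a
    exact (congrArg r (Subtype.ext (hGA a))).trans (DFunLike.congr_fun hre (φ a))

end CubeRetract

section HomotopyExtension

variable {X T : Type*} [TopologicalSpace X] [TopologicalSpace T]

-- A bump function turns the nullhomotopy into an extension that is constant away from `A`.
theorem exists_extension_of_nullhomotopic [NormalSpace T] {A W : Set T}
    (hA : IsClosed A) (hW : IsOpen W) (hAW : A ⊆ W) {Φ : C(W, X)} (hΦ : Φ.Nullhomotopic) :
    ∃ Ψ : C(T, X), Ψ.restrict A = Φ.comp (.inclusion hAW) := by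
  classical
  obtain ⟨p, ⟨H⟩⟩ := hΦ
  obtain ⟨W', hW', hAW', hW'W⟩ := normal_exists_closure_subset hA hW hAW
  obtain ⟨l, hl0, hl1, hl⟩ := exists_continuous_zero_one_of_isClosed hA hW'.isClosed_compl
    (disjoint_compl_right_iff_subset.2 hAW')
  let bump : C(T, I) := ⟨fun t => ⟨l t, hl t⟩, by fun_prop⟩
  let Ψ : T → X := fun t => if h : t ∈ W then H (bump t, ⟨t, h⟩) else p
  have hΨW : ContinuousOn Ψ W := by
    rw [continuousOn_iff_continuous_domRestrict]
    have : W.domRestrict Ψ = fun w : W => H (bump w, w) := funext fun w => dif_pos w.2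
    rw [this]
    fun_prop
  have hΨ_const : ∀ t ∈ (closure W')ᶜ, Ψ t = p := by
    intro t ht
    have hbump : bump t = 1 := Subtype.ext (hl1 fun h => ht (subset_closure h))
    by_cases h : t ∈ W <;> simp [Ψ, h, hbump]
  have hΨ : Continuous Ψ := by
    have hcover : W ∪ (closure W')ᶜ = univ :=
      univ_subset_iff.1 ((union_compl_self (closure W')).symm.subset.trans
        (union_subset_union_left _ hW'W))
    rw [← continuousOn_univ, ← hcover]
    exact hΨW.union_of_isOpen (continuousOn_const.congr hΨ_const) hW
      isClosed_closure.isOpen_compl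
  refine ⟨⟨Ψ, hΨ⟩, ?_⟩
  ext a
  have hbump : bump a = 0 := Subtype.ext (hl0 a.2)
  change Ψ a = Φ ⟨a, hAW a.2⟩
  simp [Ψ, hAW a.2, hbump]

theorem continuousOn_ite_endpoints (f g : C(T, X)) :
    ContinuousOn (fun z : I × T => if z.1 = 0 then f z.2 else g z.2) ({0, 1} ×ˢ univ) := by
  rw [insert_eq, union_prod]
  refine .union_of_isClosed (.congr (f := f ∘ Prod.snd) (by fun_prop) ?_)
    (.congr (f := g ∘ Prod.snd) (by fun_prop) ?_)
    (isClosed_singleton.prod isClosed_univ) (isClosed_singleton.prod isClosed_univ)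
  all_goals
    rintro ⟨s, t⟩ ⟨rfl, -⟩
    simp

theorem IsOpenCubeRetract.exists_homotopic_nhds (hX : IsOpenCubeRetract X) [NormalSpace (I × T)]
    {A : Set T} (hA : IsClosed A) {f g : C(T, X)}
    (hfg : (f.restrict A).Homotopic (g.restrict A)) :
    ∃ V, IsOpen V ∧ A ⊆ V ∧ (f.restrict V).Homotopic (g.restrict V) := by
  classical
  obtain ⟨H⟩ := hfg
  let φ : I × T → X := fun z =>
    if h : z.2 ∈ A then H (z.1, ⟨z.2, h⟩) else if z.1 = 0 then f z.2 else g z.2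
  have hφA (s : I) (a : A) : φ (s, a) = H (s, a) := dif_pos a.2
  have hφ_ends : EqOn φ (fun z => if z.1 = 0 then f z.2 else g z.2) ({0, 1} ×ˢ univ) := by
    rintro ⟨s, t⟩ ⟨rfl | rfl, -⟩ <;> by_cases ht : t ∈ A <;> simp [φ, ht]
  have hφ : ContinuousOn φ ({0, 1} ×ˢ univ ∪ univ ×ˢ A) := by
    refine ((continuousOn_ite_endpoints f g).congr hφ_ends).union_of_isClosed ?_
      ((toFinite _).isClosed.prod isClosed_univ) (isClosed_univ.prod hA)
    rw [continuousOn_iff_continuous_domRestrict]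
    have : (univ ×ˢ A).domRestrict φ = fun z => H (z.1.1, ⟨z.1.2, z.2.2⟩) :=
      funext fun z => hφA z.1.1 ⟨z.1.2, z.2.2⟩
    rw [this]
    fun_prop
  obtain ⟨W, hW, hAW, Φ, hΦ⟩ := hX.exists_extension_nhds
    (((toFinite _).isClosed.prod isClosed_univ).union (isClosed_univ.prod hA))
    ⟨_, hφ.domRestrict⟩
  let V : Set T := (Prod.snd '' Wᶜ)ᶜ
  have hVW {s : I} {t : T} (ht : t ∈ V) : (s, t) ∈ W := by
    by_contra h
    exact ht ⟨_, h, rfl⟩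
  have hΦ_ends (s : I) (hs : s ∈ ({0, 1} : Set I)) (v : V) :
      Φ ⟨(s, v), hVW v.2⟩ = if s = 0 then f v else g v :=
    (DFunLike.congr_fun hΦ ⟨(s, v), .inl ⟨hs, trivial⟩⟩).trans (hφ_ends ⟨hs, trivial⟩)
  refine ⟨V, (isClosedMap_snd_of_compactSpace _ hW.isClosed_compl).isOpen_compl, ?_,
    ⟨⟨⟨fun z => Φ ⟨(z.1, z.2), hVW z.2.2⟩, by fun_prop⟩, fun v => ?_, fun v => ?_⟩⟩⟩
  · rintro a ha ⟨⟨s, _⟩, hsW, rfl⟩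
    exact hsW (hAW (.inr ⟨trivial, ha⟩))
  · simpa using hΦ_ends 0 (by simp) v
  · simpa using hΦ_ends 1 (by simp) v

theorem IsOpenCubeRetract.exists_homotopic_of_dist_lt {Y : Type*} [MetricSpace Y] [CompactSpace Y]
    (hY : IsOpenCubeRetract Y) :
    ∃ ε > 0, ∀ {T : Type*} [TopologicalSpace T] (f g : C(T, Y)),
      (∀ t, dist (f t) (g t) < ε) → f.Homotopic g := by
  have hdiag : ((ContinuousMap.fst : C(Y × Y, Y)).restrict (diagonal Y)).Homotopic
      (ContinuousMap.snd.restrict (diagonal Y)) := by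
    rw [show ContinuousMap.fst.restrict (diagonal Y) = ContinuousMap.snd.restrict (diagonal Y)
      from ContinuousMap.ext fun p => p.2]
  obtain ⟨V, hV, hdiagV, hfstsnd⟩ := hY.exists_homotopic_nhds isClosed_diagonal hdiag
  have hV_unif : V ∈ uniformity Y := by
    rw [compactSpace_uniformity, ← nhdsSet_diagonal]
    exact hV.mem_nhdsSet.2 hdiagV
  obtain ⟨ε, hε, hεV⟩ := Metric.mem_uniformity_dist.1 hV_unif
  refine ⟨ε, hε, fun f g hfg => ?_⟩
  exact hfstsnd.comp
    (.refl (⟨fun t => ⟨(f t, g t), hεV (hfg t)⟩, by fun_prop⟩ : C(_, V)))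

end HomotopyExtension

section ContractibleIn

variable {X T : Type*} [TopologicalSpace X] [TopologicalSpace T] {U U' V V' K : Set X}

/-- `V` can be contracted to a point within the larger set `U`. -/
def ContractibleIn (V U : Set X) : Prop :=
  ∃ h : V ⊆ U, (ContinuousMap.inclusion h).Nullhomotopic

theorem ContractibleIn.mono (h : ContractibleIn V U) (hV : V' ⊆ V) (hU : U ⊆ U') :
    ContractibleIn V' U' := by
  obtain ⟨hVU, hnull⟩ := h
  exact ⟨hV.trans (hVU.trans hU), (hnull.comp_left (.inclusion hV)).comp_right (.inclusion hU)⟩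

theorem contractibleIn_of_contractibleSpace [ContractibleSpace V] (h : V ⊆ U) :
    ContractibleIn V U :=
  ⟨h, (id_nullhomotopic V).comp_right (.inclusion h)⟩

theorem ContractibleIn.exists_isOpen [TopologicalSpace.MetrizableSpace X]
    (hX : IsOpenCubeRetract X) (hK : IsClosed K) (hU : IsOpen U) (h : ContractibleIn K U) :
    ∃ V, IsOpen V ∧ K ⊆ V ∧ ContractibleIn V U := by
  obtain ⟨hKU, p, hp⟩ := h
  let toK : C((Subtype.val ⁻¹' K : Set U), K) := ⟨fun u => ⟨u.1.1, u.2⟩, by fun_prop⟩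
  obtain ⟨V, hV, hKV, hVp⟩ := (hX.of_isOpen hU).exists_homotopic_nhds
    (hK.preimage continuous_subtype_val) (f := .id U) (g := .const U p) (hp.comp (.refl toK))
  refine ⟨(↑) '' V, hU.isOpenMap_subtype_val _ hV, fun x hx => ⟨⟨x, hKU hx⟩, hKV hx, rfl⟩,
    image_val_subset, p, ?_⟩
  have hmem (v : Subtype.val '' V) : (⟨v, image_val_subset v.2⟩ : U) ∈ V := by
    obtain ⟨_, v, hv, rfl⟩ := v
    exact hv
  let toV : C(Subtype.val '' V, V) := ⟨fun v => ⟨⟨v, image_val_subset v.2⟩, hmem v⟩, by fun_prop⟩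
  exact hVp.comp (.refl toV)

theorem ContractibleIn.exists_extension (h : ContractibleIn V U) (hX : IsOpenCubeRetract X)
    (hV : IsOpen V) [NormalSpace T] {A : Set T} (hA : IsClosed A) {φ : T → X}
    (hφ : ContinuousOn φ A) (hφV : MapsTo φ A V) :
    ∃ Ψ : C(T, X), EqOn Ψ φ A ∧ ∀ t, Ψ t ∈ U := by
  obtain ⟨hVU, hnull⟩ := h
  obtain ⟨W, hW, hAW, Φ, hΦ⟩ := (hX.of_isOpen hV).exists_extension_nhds hA
    ⟨hφV.restrict, hφ.mapsToRestrict hφV⟩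
  obtain ⟨Ψ, hΨ⟩ := exists_extension_of_nullhomotopic hA hW hAW (hnull.comp_left Φ)
  refine ⟨(ContinuousMap.mk Subtype.val).comp Ψ, fun a ha => ?_, fun t => (Ψ t).2⟩
  have hΨa : Ψ a = inclusion hVU (Φ ⟨a, hAW ha⟩) := DFunLike.congr_fun hΨ ⟨a, ha⟩
  have hΦa : (Φ ⟨a, hAW ha⟩ : X) = φ a := congrArg Subtype.val (DFunLike.congr_fun hΦ ⟨a, ha⟩)
  exact (congrArg Subtype.val hΨa).trans hΦa

end ContractibleIn

section CellLike

variable {X Y : Type*} [TopologicalSpace X]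

/-- Every fiber of `f` is contractible in each of its neighborhoods. Such a map is surjective, since
an empty fiber is not contractible in `∅`. -/
def IsCellLike (f : X → Y) : Prop :=
  ∀ y, ∀ U, IsOpen U → f ⁻¹' {y} ⊆ U → ContractibleIn (f ⁻¹' {y}) U

/-- The fibers of `f` are contractible in their neighborhoods with a modulus that does not depend on
the fiber: the preimage of each `δ`-ball is contractible in the preimage of the concentric
`ε`-ball. -/
def IsUniformlyCellLike [PseudoMetricSpace Y] (f : X → Y) : Prop :=
  ∀ ε > 0, ∃ δ > 0, ∀ y, ContractibleIn (f ⁻¹' Metric.ball y δ) (f ⁻¹' Metric.ball y ε)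

theorem isCellLike_of_contractibleSpace_fiber {f : X → Y}
    (hf : ∀ y, ContractibleSpace (f ⁻¹' {y})) : IsCellLike f :=
  fun y _ _ hU => have := hf y; contractibleIn_of_contractibleSpace hU

theorem IsCellLike.surjective {f : X → Y} (hf : IsCellLike f) : Function.Surjective f := by
  intro y
  by_contra h
  obtain ⟨-, p, -⟩ := hf y ∅ isOpen_empty fun x hx => h ⟨x, hx⟩
  exact p.2

theorem IsUniformlyCellLike.nonempty [PseudoMetricSpace Y] {f : X → Y} (hf : IsUniformlyCellLike f)
    (y : Y) : Nonempty X := by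
  obtain ⟨_, _, hδ⟩ := hf 1 one_pos
  obtain ⟨-, x, -⟩ := hδ y
  exact ⟨x⟩

theorem IsCellLike.exists_contractibleIn_preimage_ball [TopologicalSpace.MetrizableSpace X]
    [CompactSpace X] [MetricSpace Y] {f : C(X, Y)} (hf : IsCellLike f) (hX : IsOpenCubeRetract X)
    (y : Y) {ε : ℝ} (hε : 0 < ε) :
    ∃ δ > 0, ContractibleIn (f ⁻¹' Metric.ball y δ) (f ⁻¹' Metric.ball y ε) := by
  have hball : IsOpen (f ⁻¹' Metric.ball y ε) := Metric.isOpen_ball.preimage f.continuous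
  obtain ⟨V, hV, hyV, hVε⟩ := ContractibleIn.exists_isOpen hX
    (isClosed_singleton.preimage f.continuous) hball
    (hf y _ hball (preimage_mono (singleton_subset_iff.2 (Metric.mem_ball_self hε))))
  have hy : y ∈ (f '' Vᶜ)ᶜ := by
    rintro ⟨x, hxV, hx⟩
    exact hxV (hyV hx)
  obtain ⟨δ, hδ, hδV⟩ := Metric.isOpen_iff.1
    (f.continuous.isClosedMap _ hV.isClosed_compl).isOpen_compl y hy
  refine ⟨δ, hδ, hVε.mono (fun x hx => ?_) subset_rfl⟩
  by_contra hxV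
  exact hδV hx ⟨x, hxV, rfl⟩

theorem IsCellLike.isUniformlyCellLike [TopologicalSpace.MetrizableSpace X] [CompactSpace X]
    [MetricSpace Y] {f : C(X, Y)} (hf : IsCellLike f) (hX : IsOpenCubeRetract X) :
    IsUniformlyCellLike f := by
  intro ε hε
  have : CompactSpace Y := hf.surjective.compactSpace f.continuous
  choose d hd hdε using fun y => hf.exists_contractibleIn_preimage_ball hX y (half_pos hε)
  obtain ⟨δ, hδ, hleb⟩ := lebesgue_number_lemma_of_metric (s := (univ : Set Y))
    (c := fun y => Metric.ball y (min (d y) (ε / 2))) isCompact_univ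
    (fun y => Metric.isOpen_ball)
    (fun y _ => mem_iUnion.2 ⟨y, Metric.mem_ball_self (lt_min (hd y) (half_pos hε))⟩)
  refine ⟨δ, hδ, fun y => ?_⟩
  obtain ⟨z, hz⟩ := hleb y trivial
  have hyz : dist y z < ε / 2 := (hz (Metric.mem_ball_self hδ)).trans_le (min_le_right _ _)
  refine (hdε z).mono (preimage_mono ?_) (preimage_mono ?_)
  · exact hz.trans (Metric.ball_subset_ball (min_le_left _ _))
  · exact Metric.ball_subset_ball' (by rw [dist_comm]; linarith)

end CellLike

section FineColoredCovers

/-- `T` has arbitrarily fine finite closed covers whose members are colored by `C` so that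
members of the same color are disjoint. For a compact space and `n + 1` colors this says that
the covering dimension is at most `n`. -/
def HasFineColoredCovers (C T : Type*) [PseudoMetricSpace T] : Prop :=
  ∀ η > 0, ∃ (ι : Type) (_ : Finite ι) (c : C → ι → Set T), (∀ a i, IsClosed (c a i)) ∧
    (∀ a, Pairwise fun i j => Disjoint (c a i) (c a j)) ∧
    (∀ a i, ∀ s ∈ c a i, ∀ t ∈ c a i, dist s t < η) ∧ ∀ t, ∃ a i, t ∈ c a i

variable {C C' T T' : Type*} [PseudoMetricSpace T] [PseudoMetricSpace T']

theorem HasFineColoredCovers.subtype (hT : HasFineColoredCovers C T) (s : Set T) :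
    HasFineColoredCovers C s := by
  intro η hη
  obtain ⟨ι, hι, c, hc, hdisj, hdist, hcover⟩ := hT η hη
  exact ⟨ι, hι, fun a i => Subtype.val ⁻¹' c a i,
    fun a i => (hc a i).preimage continuous_subtype_val,
    fun a i j hij => (hdisj a hij).preimage _, fun a i x hx y hy => hdist a i x hx y hy,
    fun t => hcover t⟩

theorem HasFineColoredCovers.prod (hT : HasFineColoredCovers C T)
    (hT' : HasFineColoredCovers C' T') : HasFineColoredCovers (C × C') (T × T') := by
  intro η hη
  obtain ⟨ι, hι, c, hc, hdisj, hdist, hcover⟩ := hT η hη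
  obtain ⟨ι', hι', c', hc', hdisj', hdist', hcover'⟩ := hT' η hη
  refine ⟨ι × ι', inferInstance, fun a i => c a.1 i.1 ×ˢ c' a.2 i.2,
    fun a i => (hc _ _).prod (hc' _ _), fun a i j hij => disjoint_prod.2 ?_,
    fun a i x hx y hy => max_lt (hdist _ _ _ hx.1 _ hy.1) (hdist' _ _ _ hx.2 _ hy.2), fun t => ?_⟩
  · rw [Ne, Prod.ext_iff, not_and_or] at hij
    exact hij.imp (fun h => hdisj _ h) (fun h => hdisj' _ h)
  · obtain ⟨a, i, hai⟩ := hcover t.1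
    obtain ⟨a', i', hai'⟩ := hcover' t.2
    exact ⟨(a, a'), (i, i'), hai, hai'⟩

theorem HasFineColoredCovers.pi (hT : HasFineColoredCovers C T) (n : ℕ) :
    HasFineColoredCovers (Fin n → C) (Fin n → T) := by
  intro η hη
  obtain ⟨ι, hι, c, hc, hdisj, hdist, hcover⟩ := hT η hη
  refine ⟨Fin n → ι, inferInstance, fun a i => univ.pi fun k => c (a k) (i k),
    fun a i => isClosed_set_pi fun k _ => hc _ _, fun a i j hij => ?_,
    fun a i x hx y hy => (dist_pi_lt_iff hη).2 fun k =>
      hdist _ _ _ (hx k trivial) _ (hy k trivial), fun t => ?_⟩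
  · obtain ⟨k, hk⟩ := Function.ne_iff.1 hij
    exact disjoint_univ_pi.2 ⟨k, hdisj _ hk⟩
  · choose a i hai using fun k => hcover (t k)
    exact ⟨a, i, fun k _ => hai k⟩

-- The intervals `[k / N, (k + 1) / N]`, colored by the parity of `k`.
theorem hasFineColoredCovers_unitInterval : HasFineColoredCovers (Fin 2) I := by
  intro η hη
  obtain ⟨N, hN⟩ := exists_nat_gt (1 / η)
  have hN_pos : (0 : ℝ) < N := (one_div_pos.2 hη).trans hN
  refine ⟨Fin (N + 1), inferInstance,
    fun a i => {t : I | N * (t : ℝ) ∈ Icc ((2 * i + a : ℕ) : ℝ) ((2 * i + a : ℕ) + 1)},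
    fun a i => isClosed_Icc.preimage (by fun_prop), fun a i j hij => ?_, fun a i s hs t ht => ?_,
    fun t => ?_⟩
  · refine disjoint_left.2 fun t hi hj => hij (Fin.ext ?_)
    have hle : 2 * (i : ℕ) + a ≤ 2 * j + a + 1 := by exact_mod_cast hi.1.trans hj.2
    have hge : 2 * (j : ℕ) + a ≤ 2 * i + a + 1 := by exact_mod_cast hj.1.trans hi.2
    lia
  · have hNst : |N * (s : ℝ) - N * t| ≤ 1 := by
      rw [abs_le]
      constructor <;> linarith [hs.1, hs.2, ht.1, ht.2]
    rw [← mul_sub, abs_mul, abs_of_pos hN_pos] at hNst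
    rw [Subtype.dist_eq, Real.dist_eq]
    rw [div_lt_iff₀ hη] at hN
    exact lt_of_mul_lt_mul_left (hNst.trans_lt hN) hN_pos.le
  · have hfloor_le : ⌊N * (t : ℝ)⌋₊ ≤ N :=
      Nat.floor_le_of_le (mul_le_of_le_one_right hN_pos.le t.2.2)
    refine ⟨⟨⌊N * (t : ℝ)⌋₊ % 2, Nat.mod_lt _ two_pos⟩, ⟨⌊N * (t : ℝ)⌋₊ / 2, by lia⟩, ?_⟩
    simp only [Nat.div_add_mod, mem_ofPred_eq]
    exact ⟨Nat.floor_le (mul_nonneg hN_pos.le t.2.1), (Nat.lt_floor_add_one _).le⟩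

end FineColoredCovers

section ApproximateLift

variable {X Y T : Type*} [TopologicalSpace X] [PseudoMetricSpace Y] [TopologicalSpace T]
  {f : X → Y} {φ : T → Y} {ψ : T → X} {ε η : ℝ} {B : Set T}

/-- `ψ` is a continuous lift of `φ` through `f` over the set `B`, up to an error less than `ε`. -/
structure IsApproxLiftOn_s11 (f : X → Y) (φ : T → Y) (ε : ℝ) (B : Set T) (ψ : T → X) : Prop where
  continuousOn : ContinuousOn ψ B
  dist_lt : ∀ t ∈ B, dist (f (ψ t)) (φ t) < ε

theorem IsApproxLiftOn_s11.mono_error (h : IsApproxLiftOn_s11 f φ η B ψ) (hηε : η ≤ ε) :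
    IsApproxLiftOn_s11 f φ ε B ψ :=
  ⟨h.continuousOn, fun t ht => (h.dist_lt t ht).trans_le hηε⟩

theorem exists_continuousOn_glue {ι : Type*} [Finite ι] {c : ι → Set T} (hB : IsClosed B)
    (hc : ∀ i, IsClosed (c i)) (hdisj : Pairwise fun i j => Disjoint (c i) (c j))
    (hψ : ContinuousOn ψ B) {Ψ : ι → T → X} (hΨ : ∀ i, ContinuousOn (Ψ i) (c i))
    (hΨψ : ∀ i, EqOn (Ψ i) ψ (B ∩ c i)) :
    ∃ ψ' : T → X, ContinuousOn ψ' (B ∪ ⋃ i, c i) ∧ EqOn ψ' ψ B ∧ ∀ i, EqOn ψ' (Ψ i) (c i) := by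
  classical
  let ψ' : T → X := fun t => if h : t ∉ B ∧ ∃ i, t ∈ c i then Ψ h.2.choose t else ψ t
  have hψ'B : EqOn ψ' ψ B := fun t ht => dif_neg fun h => h.1 ht
  have hψ'c (i : ι) : EqOn ψ' (Ψ i) (c i) := by
    intro t ht
    by_cases htB : t ∈ B
    · rw [hψ'B htB, hΨψ i ⟨htB, ht⟩]
    · have h : t ∉ B ∧ ∃ i, t ∈ c i := ⟨htB, i, ht⟩
      have hi : h.2.choose = i := by
        by_contra hne
        exact (hdisj hne).le_bot ⟨h.2.choose_spec, ht⟩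
      rw [← hi]
      exact dif_pos h
  refine ⟨ψ', (hψ.congr hψ'B).union_of_isClosed ?_ hB (isClosed_iUnion_of_finite hc), hψ'B, hψ'c⟩
  exact (locallyFinite_of_finite c).continuousOn_iUnion hc fun i => (hΨ i).congr (hψ'c i)

variable [NormalSpace T]

theorem IsUniformlyCellLike.exists_approxLiftOn_of_isClosed (hf : IsUniformlyCellLike f)
    (hX : IsOpenCubeRetract X) (hfc : Continuous f) (hε : 0 < ε) :
    ∃ η > 0, ∀ {B D : Set T} {ψ : T → X}, IsClosed B → IsApproxLiftOn_s11 f φ η B ψ → IsClosed D →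
      (∀ s ∈ D, ∀ t ∈ D, dist (φ s) (φ t) < η) →
      ∃ Ψ, IsApproxLiftOn_s11 f φ ε D Ψ ∧ EqOn Ψ ψ (B ∩ D) := by
  obtain ⟨δ, hδ, hcontr⟩ := hf (ε / 2) (half_pos hε)
  refine ⟨min (δ / 2) (ε / 2), by positivity, fun {B D ψ} hB hψ hD hφD => ?_⟩
  rcases D.eq_empty_or_nonempty with rfl | ⟨s, hs⟩
  · exact ⟨ψ, ⟨continuousOn_empty ψ, by simp⟩, eqOn_refl _ _⟩
  · have hψball : MapsTo ψ (B ∩ D) (f ⁻¹' Metric.ball (φ s) δ) := by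
      rintro t ⟨htB, htD⟩
      calc dist (f (ψ t)) (φ s) ≤ dist (f (ψ t)) (φ t) + dist (φ t) (φ s) := dist_triangle _ _ _
        _ < δ / 2 + δ / 2 := add_lt_add ((hψ.dist_lt t htB).trans_le (min_le_left _ _))
          ((hφD t htD s hs).trans_le (min_le_left _ _))
        _ = δ := add_halves δ
    obtain ⟨Ψ, hΨψ, hΨ⟩ := (hcontr (φ s)).exists_extension hX (Metric.isOpen_ball.preimage hfc)
      (hB.inter hD) (hψ.continuousOn.mono inter_subset_left) hψball
    refine ⟨Ψ, ⟨Ψ.continuous.continuousOn, fun t ht => ?_⟩, hΨψ⟩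
    calc dist (f (Ψ t)) (φ t) ≤ dist (f (Ψ t)) (φ s) + dist (φ s) (φ t) := dist_triangle _ _ _
      _ < ε / 2 + ε / 2 := add_lt_add (hΨ t) ((hφD s hs t ht).trans_le (min_le_right _ _))
      _ = ε := add_halves ε

theorem IsUniformlyCellLike.exists_approxLiftOn_union (hf : IsUniformlyCellLike f)
    (hX : IsOpenCubeRetract X) (hfc : Continuous f) (hε : 0 < ε) :
    ∃ η > 0, ∀ {ι : Type*} [Finite ι] {c : ι → Set T} {B : Set T} {ψ : T → X},
      IsClosed B → IsApproxLiftOn_s11 f φ η B ψ → (∀ i, IsClosed (c i)) →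
      (Pairwise fun i j => Disjoint (c i) (c j)) →
      (∀ i, ∀ s ∈ c i, ∀ t ∈ c i, dist (φ s) (φ t) < η) →
      ∃ ψ', IsApproxLiftOn_s11 f φ ε (B ∪ ⋃ i, c i) ψ' ∧ EqOn ψ' ψ B := by
  obtain ⟨η, hη, hpiece⟩ := hf.exists_approxLiftOn_of_isClosed hX hfc hε (φ := φ)
  refine ⟨min η ε, lt_min hη hε, fun {ι _ c B ψ} hB hψ hc hdisj hφc => ?_⟩
  choose Ψ hΨ hΨψ using fun i => hpiece hB (hψ.mono_error (min_le_left _ _)) (hc i)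
    fun s hs t ht => (hφc i s hs t ht).trans_le (min_le_left _ _)
  obtain ⟨ψ', hψ', hψ'B, hψ'c⟩ := exists_continuousOn_glue hB hc hdisj hψ.continuousOn
    (fun i => (hΨ i).continuousOn) hΨψ
  refine ⟨ψ', ⟨hψ', ?_⟩, hψ'B⟩
  rintro t (ht | ht)
  · rw [hψ'B ht]
    exact (hψ.dist_lt t ht).trans_le (min_le_right _ _)
  · obtain ⟨i, hi⟩ := mem_iUnion.1 ht
    rw [hψ'c i hi]
    exact (hΨ i).dist_lt t hi

-- The colors are treated one after another. Each of them enlarges the error, so the initial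
-- tolerance `η` is found by working backwards from `ε`.
theorem IsUniformlyCellLike.exists_approxLiftOn_biUnion (hf : IsUniformlyCellLike f)
    (hX : IsOpenCubeRetract X) (hfc : Continuous f) {C : Type*} (S : Finset C) (hε : 0 < ε) :
    ∃ η > 0, ∀ {ι : Type*} [Finite ι] {c : C → ι → Set T} {B : Set T} {ψ : T → X},
      IsClosed B → IsApproxLiftOn_s11 f φ η B ψ → (∀ a i, IsClosed (c a i)) →
      (∀ a, Pairwise fun i j => Disjoint (c a i) (c a j)) →
      (∀ a i, ∀ s ∈ c a i, ∀ t ∈ c a i, dist (φ s) (φ t) < η) →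
      ∃ ψ', IsApproxLiftOn_s11 f φ ε (B ∪ ⋃ a ∈ S, ⋃ i, c a i) ψ' ∧ EqOn ψ' ψ B := by
  classical
  induction S using Finset.induction_on generalizing ε with
  | empty => exact ⟨ε, hε, fun {ι _ c B ψ} _ hψ _ _ _ => ⟨ψ, by simpa using hψ, eqOn_refl _ _⟩⟩
  | insert a S _ ih =>
    obtain ⟨δ, hδ, hstep⟩ := hf.exists_approxLiftOn_union hX hfc hε (φ := φ)
    obtain ⟨η, hη, hlift⟩ := ih hδ
    refine ⟨min η δ, lt_min hη hδ, fun {ι _ c B ψ} hB hψ hc hdisj hφc => ?_⟩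
    obtain ⟨ψS, hψS, hψSB⟩ := hlift hB (hψ.mono_error (min_le_left _ _)) hc hdisj
      fun a i s hs t ht => (hφc a i s hs t ht).trans_le (min_le_left _ _)
    obtain ⟨ψ', hψ', hψ'S⟩ := hstep
      (hB.union (isClosed_biUnion_finset fun b _ => isClosed_iUnion_of_finite (hc b))) hψS (hc a)
      (hdisj a) fun i s hs t ht => (hφc a i s hs t ht).trans_le (min_le_right _ _)
    refine ⟨ψ', ?_, (hψ'S.mono subset_union_left).trans hψSB⟩
    rwa [Finset.set_biUnion_insert, union_comm (⋃ i, c a i), ← union_assoc]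

end ApproximateLift

section LiftingHomotopyClasses

variable {X Y T C : Type*} [TopologicalSpace X] [PseudoMetricSpace Y]
  [PseudoMetricSpace T] [CompactSpace T]

theorem IsUniformlyCellLike.exists_approxLift_extension [Finite C] {f : X → Y}
    (hf : IsUniformlyCellLike f) (hX : IsOpenCubeRetract X) (hfc : Continuous f)
    (hT : HasFineColoredCovers C T) (φ : C(T, Y)) {L : Set T} (hL : IsClosed L) {ψ₀ : T → X}
    (hψ₀ : ContinuousOn ψ₀ L) (hψ₀φ : EqOn (f ∘ ψ₀) φ L) {ε : ℝ} (hε : 0 < ε) :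
    ∃ ψ : C(T, X), EqOn ψ ψ₀ L ∧ ∀ t, dist (f (ψ t)) (φ t) < ε := by
  have := Fintype.ofFinite C
  obtain ⟨η, hη, hlift⟩ := hf.exists_approxLiftOn_biUnion hX hfc (Finset.univ (α := C)) hε
    (φ := φ)
  obtain ⟨γ, hγ, hφγ⟩ := Metric.uniformContinuous_iff.1
    (CompactSpace.uniformContinuous_of_continuous φ.continuous) η hη
  obtain ⟨ι, _, c, hc, hdisj, hdist, hcover⟩ := hT γ hγ
  have hL_lift : IsApproxLiftOn_s11 f φ η L ψ₀ := by
    refine ⟨hψ₀, fun t ht => ?_⟩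
    rw [← hψ₀φ ht, Function.comp_apply, dist_self]
    exact hη
  obtain ⟨ψ, hψ, hψL⟩ := hlift hL hL_lift hc hdisj
    fun a i s hs t ht => hφγ (hdist a i s hs t ht)
  have huniv : L ∪ ⋃ a ∈ Finset.univ, ⋃ i, c a i = univ :=
    eq_univ_of_forall fun t => .inr (by simpa using hcover t)
  rw [huniv] at hψ
  exact ⟨⟨ψ, continuousOn_univ.1 hψ.continuousOn⟩, hψL, fun t => hψ.dist_lt t trivial⟩

theorem IsUniformlyCellLike.exists_comp_homotopic {Y : Type*} [MetricSpace Y] [CompactSpace Y]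
    [Finite C] {f : C(X, Y)} (hf : IsUniformlyCellLike f) (hX : IsOpenCubeRetract X)
    (hY : IsOpenCubeRetract Y) (hT : HasFineColoredCovers C T) (φ : C(T, Y)) :
    ∃ ψ : C(T, X), (f.comp ψ).Homotopic φ := by
  obtain ⟨ε, hε, hclose⟩ := hY.exists_homotopic_of_dist_lt
  have ψ₀ : T → X := fun t => (hf.nonempty (φ t)).some
  obtain ⟨ψ, -, hψ⟩ := hf.exists_approxLift_extension hX f.continuous hT φ isClosed_empty
    (continuousOn_empty ψ₀) (eqOn_empty _ _) hε
  exact ⟨ψ, hclose _ _ hψ⟩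

theorem IsUniformlyCellLike.homotopic_of_comp_homotopic [Finite C] {f : C(X, Y)}
    (hf : IsUniformlyCellLike f) (hX : IsOpenCubeRetract X) (hT : HasFineColoredCovers C T)
    {a b : C(T, X)} (hab : (f.comp a).Homotopic (f.comp b)) : a.Homotopic b := by
  obtain ⟨H⟩ := hab
  have hH_ends : EqOn (f ∘ fun z : I × T => if z.1 = 0 then a z.2 else b z.2) H.toContinuousMap
      ({0, 1} ×ˢ univ) := by
    rintro ⟨s, t⟩ ⟨rfl | rfl, -⟩ <;> simp
  obtain ⟨K, hK, -⟩ := hf.exists_approxLift_extension hX f.continuous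
    (hasFineColoredCovers_unitInterval.prod hT) H.toContinuousMap
    ((toFinite _).isClosed.prod isClosed_univ) (continuousOn_ite_endpoints a b) hH_ends one_pos
  refine ⟨⟨K, fun t => ?_, fun t => ?_⟩⟩
  · simpa using hK (x := (0, t)) ⟨.inl rfl, trivial⟩
  · simpa using hK (x := (1, t)) ⟨.inr rfl, trivial⟩

end LiftingHomotopyClasses

section HomotopyDomination

/-- `X` is a retract of `T` up to homotopy. -/
def HomotopyDominatedBy (X T : Type*) [TopologicalSpace X] [TopologicalSpace T] : Prop :=
  ∃ (u : C(X, T)) (d : C(T, X)), (d.comp u).Homotopic (.id X)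

theorem exists_forall_cylinder_subset_of_isCompact {E : ℕ → Type*} [∀ i, TopologicalSpace (E i)]
    {K U : Set (∀ i, E i)} (hK : IsCompact K) (hU : IsOpen U) (hKU : K ⊆ U) :
    ∃ n, ∀ x ∈ K, PiNat.cylinder x n ⊆ U := by
  refine hK.induction_on (p := fun K => ∃ n, ∀ x ∈ K, PiNat.cylinder x n ⊆ U) ⟨0, by simp⟩
    (fun s t hst ⟨n, hn⟩ => ⟨n, fun x hx => hn x (hst hx)⟩) ?_ fun x hx => ?_
  · rintro s t ⟨m, hm⟩ ⟨n, hn⟩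
    refine ⟨max m n, ?_⟩
    rintro x (hx | hx)
    · exact (PiNat.cylinder_anti x (le_max_left m n)).trans (hm x hx)
    · exact (PiNat.cylinder_anti x (le_max_right m n)).trans (hn x hx)
  · obtain ⟨J, v, hv, hvU⟩ := isOpen_pi_iff.1 hU x (hKU hx)
    refine ⟨(J : Set ℕ).pi v, mem_nhdsWithin_of_mem_nhds
      (set_pi_mem_nhds J.finite_toSet fun i hi => (hv i hi).1.mem_nhds (hv i hi).2),
      J.sup id + 1, fun y hy z hz => hvU fun i hi => ?_⟩
    rw [PiNat.mem_cylinder_iff.1 hz i (Nat.lt_succ_of_le (J.le_sup (f := id) hi))]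
    exact hy i hi

-- Shrinking all but finitely many coordinates to `0` does not leave the open set that retracts
-- onto `X`.
theorem IsOpenCubeRetract.exists_homotopyDominatedBy {X : Type*} [TopologicalSpace X]
    [CompactSpace X] (hX : IsOpenCubeRetract X) :
    ∃ (n : ℕ) (T : Set (Fin n → I)), IsCompact T ∧ HomotopyDominatedBy X T := by
  obtain ⟨U, e, r, hU, hre⟩ := hX
  let e' : C(X, ℕ → I) := ⟨fun x => e x, by fun_prop⟩
  obtain ⟨n, hn⟩ := exists_forall_cylinder_subset_of_isCompact (isCompact_range e'.continuous) hU
    (by rintro _ ⟨x, rfl⟩; exact (e x).2)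
  let u : C(X, Fin n → I) := ⟨fun x i => e' x i, by fun_prop⟩
  let extend : C(Fin n → I, ℕ → I) :=
    ⟨fun p i => if h : i < n then p ⟨i, h⟩ else 0, continuous_pi fun i => by
      split_ifs <;> fun_prop⟩
  let shrink : C(I × X, ℕ → I) :=
    ⟨fun z i => if i < n then e' z.2 i else z.1 * e' z.2 i, continuous_pi fun i => by
      split_ifs <;> fun_prop⟩
  have hshrink (z : I × X) : shrink z ∈ U :=
    hn _ ⟨z.2, rfl⟩ (PiNat.mem_cylinder_iff.2 fun i hi => if_pos hi)
  have hextend (x : X) : extend (u x) = shrink (0, x) := by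
    ext1 i
    simp [extend, shrink, u]
  have hextendU (p : range u) : extend p ∈ U := by
    obtain ⟨_, x, rfl⟩ := p
    exact hextend x ▸ hshrink (0, x)
  refine ⟨n, range u, isCompact_range u.continuous, ⟨fun x => ⟨u x, x, rfl⟩, by fun_prop⟩,
    ⟨fun p => r ⟨extend p, hextendU p⟩, by fun_prop⟩,
    ⟨⟨⟨fun z => r ⟨shrink z, hshrink z⟩, by fun_prop⟩, fun x => ?_, fun x => ?_⟩⟩⟩
  · exact congrArg r (Subtype.ext (hextend x).symm)
  · have : (⟨shrink (1, x), hshrink (1, x)⟩ : U) = e x := by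
      ext i
      simp [shrink, e']
    exact (congrArg r this).trans (DFunLike.congr_fun hre x)

-- `g` is obtained by lifting the domination `T → Y` of `Y` along `f`.
theorem exists_homotopyInverse_of_homotopyDominatedBy {X Y S T : Type*} [TopologicalSpace X]
    [TopologicalSpace Y] [TopologicalSpace S] [TopologicalSpace T] {f : C(X, Y)}
    (hX : HomotopyDominatedBy X S) (hY : HomotopyDominatedBy Y T)
    (hsurj : ∀ φ : C(T, Y), ∃ ψ : C(T, X), (f.comp ψ).Homotopic φ)
    (hinj : ∀ a b : C(S, X), (f.comp a).Homotopic (f.comp b) → a.Homotopic b) :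
    ∃ g : C(Y, X), (f.comp g).Homotopic (.id Y) ∧ (g.comp f).Homotopic (.id X) := by
  obtain ⟨u, d, hdu⟩ := hX
  obtain ⟨v, d', hdv⟩ := hY
  obtain ⟨ψ, hψ⟩ := hsurj d'
  let g : C(Y, X) := ψ.comp v
  have hfg : (f.comp g).Homotopic (.id Y) := (hψ.comp (.refl v)).trans hdv
  have hgfd : ((g.comp f).comp d).Homotopic d := hinj _ _ (hfg.comp (.refl (f.comp d)))
  exact ⟨g, hfg, (ContinuousMap.Homotopic.comp (.refl (g.comp f)) hdu.symm).trans
    ((hgfd.comp (.refl u)).trans hdu)⟩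

end HomotopyDomination

theorem stmt_11_general {X Y : Type*} [MetricSpace X] [MetricSpace Y] [CompactSpace X]
    (hX : IsANR X) (hY : IsANR Y) (f : C(X, Y)) (hf : IsCellLike f) :
    ∃ g : C(Y, X), (f.comp g).Homotopic (.id Y) ∧ (g.comp f).Homotopic (.id X) := by
  have : CompactSpace Y := hf.surjective.compactSpace f.continuous
  have hX := hX.isOpenCubeRetract
  have hY := hY.isOpenCubeRetract
  have hf := hf.isUniformlyCellLike hX
  have hfine {n : ℕ} (T : Set (Fin n → I)) : HasFineColoredCovers (Fin n → Fin 2) T :=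
    (hasFineColoredCovers_unitInterval.pi n).subtype T
  obtain ⟨m, S, hS, hXS⟩ := hX.exists_homotopyDominatedBy
  obtain ⟨n, T, hT, hYT⟩ := hY.exists_homotopyDominatedBy
  have := isCompact_iff_compactSpace.1 hS
  have := isCompact_iff_compactSpace.1 hT
  exact exists_homotopyInverse_of_homotopyDominatedBy hXS hYT
    (hf.exists_comp_homotopic hX hY (hfine T))
    (fun a b => hf.homotopic_of_comp_homotopic hX (hfine S))

/-- **Theorem 3 (main).** If `X` and `Y` are compact connected metric ANRs, `X`
is simply connected, and `f : X → Y` is a continuous surjection all of whose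
fibers are contractible, then `f` is a homotopy equivalence. -/
theorem stmt_11 {X Y : Type*} [MetricSpace X] [MetricSpace Y]
    [CompactSpace X] [CompactSpace Y] [ConnectedSpace X] [ConnectedSpace Y]
    (hXanr : IsANR X) (hYanr : IsANR Y) [SimplyConnectedSpace X]
    (f : X → Y) (hfc : Continuous f) (hfs : Function.Surjective f)
    (hfib : ∀ y : Y, ContractibleSpace (f ⁻¹' {y})) :
    ∃ g : C(Y, X),
      ((⟨f, hfc⟩ : C(X, Y)).comp g).Homotopic (ContinuousMap.id Y) ∧
      (g.comp (⟨f, hfc⟩ : C(X, Y))).Homotopic (ContinuousMap.id X) :=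
  stmt_11_general hXanr hYanr ⟨f, hfc⟩ (isCellLike_of_contractibleSpace_fiber hfib)
end
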